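/- arXiv:2412.07569 — 2 statements merged into one kernel-verified Lean document; each statement's English description precedes it below -/
import Mathlib

section
/- Let F be a field of characteristic 0. Consider the polynomial ring C = F[z_{j,i}] indexed by pairs (j,i) with i ∈ {0,1,...,n₁}, j ∈ {m₀+1,...,m, m+1}, excluding the pair (m+1, 0). Define the algebra homomorphism φ : C → F[x₁,...,x_{n₁}, y_{m₀+1},...,y_m] by φ(z_{j,i}) = x_i x_j − y_i y_j when i ≥ 1 and j ≤ m (interpreting x_j, y_i as new variables as appropriate), φ(z_{m+1,i}) = x_i for i ≥ 1, and φ(z_{j,0}) = y_j for j ≤ m. Then ker φ equals the ideal generated by all 3×3 minors of the matrix (z_{j,i}). -/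
open MvPolynomial

namespace Stmt1

variable (F : Type*) [Field F] [CharZero F] (n₁ k : ℕ)

/-- The target polynomial ring: variables `x_i, x_j` (left) and `y_i, y_j` (right),
for `i ∈ J₁` (of size `n₁`) and `j ∈ J₃` (of size `k`). -/
abbrev Target := MvPolynomial ((Fin n₁ ⊕ Fin k) ⊕ (Fin n₁ ⊕ Fin k)) F

/-- The source polynomial ring `C = F[z_{j,i}]`, with `j : Fin (k+1)` (the last index
playing the role of `m+1`), `i : Fin (n₁+1)` (the index `0` playing the role of `0`),
excluding the pair `(m+1, 0)`. -/
abbrev Source :=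
  MvPolynomial {p : Fin (k + 1) × Fin (n₁ + 1) // p ≠ (Fin.last k, 0)} F

/-- The matrix of "variables" `z_{j,i}`, with `z_{m+1,0} = 0`. -/
noncomputable def Z (j : Fin (k + 1)) (i : Fin (n₁ + 1)) : Source F n₁ k :=
  if h : (j, i) ≠ (Fin.last k, 0) then X ⟨(j, i), h⟩ else 0

/-- The image of the variable `z_{j,i}` under `φ`. -/
noncomputable def img (j : Fin (k + 1)) (i : Fin (n₁ + 1)) : Target F n₁ k :=
  if hj : (j : ℕ) < k then
    if hi : (i : ℕ) = 0 then
      -- z_{j,0} ↦ y_j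
      X (Sum.inr (Sum.inr ⟨j, hj⟩))
    else
      -- z_{j,i} ↦ x_i x_j − y_i y_j
      X (Sum.inl (Sum.inl ⟨(i : ℕ) - 1, by have := i.isLt; omega⟩)) *
          X (Sum.inl (Sum.inr ⟨j, hj⟩)) -
        X (Sum.inr (Sum.inl ⟨(i : ℕ) - 1, by have := i.isLt; omega⟩)) *
          X (Sum.inr (Sum.inr ⟨j, hj⟩))
  else
    if hi : (i : ℕ) = 0 then 0
    else
      -- z_{m+1,i} ↦ x_i
      X (Sum.inl (Sum.inl ⟨(i : ℕ) - 1, by have := i.isLt; omega⟩))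

/-- The algebra homomorphism `φ : C → F[x, y]`. -/
noncomputable def φ : Source F n₁ k →ₐ[F] Target F n₁ k :=
  aeval (fun v => img F n₁ k v.1.1 v.1.2)

/-- Combinatorial standardness for a partial matching. -/
def StdRel (E : ℕ → ℕ → Prop) : Prop :=
  ∀ p q, E p q → (∃ p1 < p, ∀ q' ≤ q, ¬ E p1 q') → (∃ q1 < q, ∀ p' ≤ p, ¬ E p' q1) → False

lemma StdRel.flip {E : ℕ → ℕ → Prop} (h : StdRel E) : StdRel (fun a b => E b a) :=
  fun p q hE hA hB => h q p hE hB hA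

lemma comb_exc (E : ℕ → ℕ → Prop) (hr : ∀ p q q', E p q → E p q' → q = q')
    (hc : ∀ p p' q, E p q → E p' q → p = p')
    (hs : StdRel E) {p q : ℕ} (h : E p q) (hpq : p ≤ q) : ∀ p1 < p, ∃ q' < q, E p1 q' := by
  intro p1 hp1
  by_contra hA
  push Not at hA
  have hA' : ∀ q' ≤ q, ¬ E p1 q' := by
    intro q' hq' he
    rcases hq'.lt_or_eq with h1 | rfl
    · exact hA q' h1 he
    · exact hp1.ne (hc _ _ _ he h)
  have hB : ∀ q1 < q, ∃ p' ≤ p, E p' q1 := by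
    by_contra hB
    push Not at hB
    exact hs p q h ⟨p1, hp1, hA'⟩ hB
  choose! f hf hfE using hB
  have := Finset.card_le_card_of_injOn (s := Finset.range q)
    (t := ((Finset.range (p + 1)).erase p).erase p1) f (by
      intro q1 hq1
      simp only [Finset.coe_range, Set.mem_Iio] at hq1
      simp only [Finset.coe_erase, Finset.coe_range, Set.mem_sdiff, Set.mem_Iio,
        Set.mem_singleton_iff]
      refine ⟨⟨by have := hf q1 hq1; omega, fun he => ?_⟩, fun he => ?_⟩
      · have h1 := hfE q1 hq1
        rw [he] at h1
        exact hq1.ne (hr _ _ _ h1 h)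
      · have h1 := hfE q1 hq1
        rw [he] at h1
        exact hA q1 hq1 h1) (by
      intro a ha b hb hab
      simp only [Finset.coe_range, Set.mem_Iio] at ha hb
      have h1 := hfE a ha
      have h2 := hfE b hb
      rw [hab] at h1
      exact hr _ _ _ h1 h2)
  rw [Finset.card_range, Finset.card_erase_of_mem, Finset.card_erase_of_mem, Finset.card_range]
    at this
  · omega
  · simp
  · simp; omega

lemma comb_nonexc (E : ℕ → ℕ → Prop) (hr : ∀ p q q', E p q → E p q' → q = q')
    (hc : ∀ p p' q, E p q → E p' q → p = p')
    (hs : StdRel E) {p q : ℕ} (h : E p q) (hpq : q ≤ p) : ∀ q1 < q, ∃ p' < p, E p' q1 :=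
  comb_exc (fun a b => E b a) (fun p q q' => hc q q' p) (fun p p' q => hr q p p') hs.flip h hpq

open Classical in
lemma comb_rank (E : ℕ → ℕ → Prop) (hr : ∀ p q q', E p q → E p q' → q = q')
    (hc : ∀ p p' q, E p q → E p' q → p = p')
    (hs : StdRel E) {p q : ℕ} (h : E p q) (hpq : q ≤ p) :
    Nat.count (fun q => ¬ ∃ p < q, E p q) q = Nat.count (fun p => ∃ q ≤ p, E p q) p := by
  rw [Nat.count_eq_card_filter_range, Nat.count_eq_card_filter_range]
  have H := comb_nonexc E hr hc hs h hpq
  choose! f hf hfE using H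
  refine Finset.card_bij (fun a _ => f a) ?_ ?_ ?_
  · intro a ha
    simp only [Finset.mem_filter, Finset.mem_range] at ha ⊢
    refine ⟨hf a ha.1, a, ?_, hfE a ha.1⟩
    by_contra hlt
    exact ha.2 ⟨f a, by omega, hfE a ha.1⟩
  · intro a ha b hb hab
    simp only [Finset.mem_filter, Finset.mem_range] at ha hb
    have h1 := hfE a ha.1
    have h2 := hfE b hb.1
    rw [hab] at h1
    exact hr _ _ _ h1 h2
  · intro p1 hp1
    simp only [Finset.mem_filter, Finset.mem_range] at hp1
    obtain ⟨hlt, q1, hq1, hE⟩ := hp1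
    have hq1q : q1 < q := by
      by_contra hge
      rcases (not_lt.mp hge).lt_or_eq with h1 | rfl
      · obtain ⟨p', hp', hE'⟩ := comb_nonexc E hr hc hs hE hq1 q h1
        have := hc _ _ _ hE' h
        omega
      · have := hc _ _ _ hE h
        omega
    refine ⟨q1, ?_, hc _ _ _ (hfE q1 hq1q) hE⟩
    simp only [Finset.mem_filter, Finset.mem_range]
    refine ⟨hq1q, ?_⟩
    rintro ⟨p2, hp2, hE2⟩
    have := hc _ _ _ hE2 hE
    omega

open Classical in
lemma comb_rank' (E : ℕ → ℕ → Prop) (hr : ∀ p q q', E p q → E p q' → q = q')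
    (hc : ∀ p p' q, E p q → E p' q → p = p')
    (hs : StdRel E) {p q : ℕ} (h : E p q) (hpq : p < q) :
    Nat.count (fun p => ¬ ∃ q ≤ p, E p q) p = Nat.count (fun q => ∃ p < q, E p q) q := by
  rw [Nat.count_eq_card_filter_range, Nat.count_eq_card_filter_range]
  have H := comb_exc E hr hc hs h hpq.le
  choose! f hf hfE using H
  refine Finset.card_bij (fun a _ => f a) ?_ ?_ ?_
  · intro a ha
    simp only [Finset.mem_filter, Finset.mem_range] at ha ⊢
    refine ⟨hf a ha.1, a, ?_, hfE a ha.1⟩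
    by_contra hlt
    exact ha.2 ⟨f a, by omega, hfE a ha.1⟩
  · intro a ha b hb hab
    simp only [Finset.mem_filter, Finset.mem_range] at ha hb
    have h1 := hfE a ha.1
    have h2 := hfE b hb.1
    rw [hab] at h1
    exact hc _ _ _ h1 h2
  · intro q1 hq1
    simp only [Finset.mem_filter, Finset.mem_range] at hq1
    obtain ⟨hlt, p1, hp1, hE⟩ := hq1
    have hp1p : p1 < p := by
      by_contra hge
      rcases (not_lt.mp hge).lt_or_eq with h1 | rfl
      · obtain ⟨p', hp', hE'⟩ := comb_exc E hr hc hs hE hp1.le p h1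
        have := hr _ _ _ hE' h
        omega
      · have := hr _ _ _ hE h
        omega
    refine ⟨p1, ?_, hr _ _ _ (hfE p1 hp1p) hE⟩
    simp only [Finset.mem_filter, Finset.mem_range]
    refine ⟨hp1p, ?_⟩
    rintro ⟨p2, hp2, hE2⟩
    have := hr _ _ _ hE2 hE
    omega

open Classical in
lemma comb_le (E E' : ℕ → ℕ → Prop) (hr : ∀ p q q', E p q → E p q' → q = q')
    (hc : ∀ p p' q, E p q → E p' q → p = p') (hs : StdRel E)
    (hr' : ∀ p q q', E' p q → E' p q' → q = q')
    (hc' : ∀ p p' q, E' p q → E' p' q → p = p') (hs' : StdRel E')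
    (h1 : ∀ p, (∃ q ≤ p, E p q) ↔ (∃ q ≤ p, E' p q))
    (h2 : ∀ q, (∃ p < q, E p q) ↔ (∃ p < q, E' p q)) (p q : ℕ) (h : E p q) : E' p q := by
  rcases le_or_gt q p with hqp | hpq
  · obtain ⟨q', hq', hE'⟩ := (h1 p).mp ⟨q, hqp, h⟩
    have e1 := comb_rank E hr hc hs h hqp
    have e2 := comb_rank E' hr' hc' hs' hE' hq'
    simp only [← h1, ← h2] at e2
    have := Nat.count_injective (p := fun q => ¬ ∃ p < q, E p q) (m := q) (n := q') ?_ ?_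
      (e1.trans e2.symm)
    · rwa [this]
    · rintro ⟨p2, hp2, hE2⟩
      have := hc _ _ _ hE2 h
      omega
    · rw [h2]
      rintro ⟨p2, hp2, hE2⟩
      have := hc' _ _ _ hE2 hE'
      omega
  · obtain ⟨p', hp', hE'⟩ := (h2 q).mp ⟨p, hpq, h⟩
    have e1 := comb_rank' E hr hc hs h hpq
    have e2 := comb_rank' E' hr' hc' hs' hE' hp'
    simp only [← h1, ← h2] at e2
    have := Nat.count_injective (p := fun p => ¬ ∃ q ≤ p, E p q) (m := p) (n := p') ?_ ?_
      (e1.trans e2.symm)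
    · rwa [this]
    · rintro ⟨p2, hp2, hE2⟩
      have := hr _ _ _ hE2 h
      omega
    · rw [h1]
      rintro ⟨p2, hp2, hE2⟩
      have := hr' _ _ _ hE2 hE'
      omega

set_option linter.unusedSectionVars false

/-- First row factor. -/
noncomputable def A1 (j : Fin (k + 1)) : Target F n₁ k :=
  Fin.lastCases (motive := fun _ => Target F n₁ k) 1 (fun j => X (Sum.inl (Sum.inr j))) j

/-- Second row factor. -/
noncomputable def A2 (j : Fin (k + 1)) : Target F n₁ k :=
  Fin.lastCases (motive := fun _ => Target F n₁ k) 0 (fun j => X (Sum.inr (Sum.inr j))) j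

/-- First column factor. -/
noncomputable def B1 (i : Fin (n₁ + 1)) : Target F n₁ k :=
  Fin.cases (motive := fun _ => Target F n₁ k) 0 (fun i => X (Sum.inl (Sum.inl i))) i

/-- Second column factor. -/
noncomputable def B2 (i : Fin (n₁ + 1)) : Target F n₁ k :=
  Fin.cases (motive := fun _ => Target F n₁ k) 1 (fun i => - X (Sum.inr (Sum.inl i))) i

lemma img_cc (j : Fin k) (i : Fin n₁) : img F n₁ k j.castSucc i.succ =
    X (Sum.inl (Sum.inl i)) * X (Sum.inl (Sum.inr j)) -
      X (Sum.inr (Sum.inl i)) * X (Sum.inr (Sum.inr j)) := by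
  simp [img]

lemma img_c0 (j : Fin k) : img F n₁ k j.castSucc 0 = X (Sum.inr (Sum.inr j)) := by
  simp [img]

lemma img_ls (i : Fin n₁) : img F n₁ k (Fin.last k) i.succ = X (Sum.inl (Sum.inl i)) := by
  simp [img]

lemma img_l0 : img F n₁ k (Fin.last k) 0 = 0 := by
  simp [img]

lemma img_eq (j : Fin (k + 1)) (i : Fin (n₁ + 1)) :
    img F n₁ k j i = A1 F n₁ k j * B1 F n₁ k i + A2 F n₁ k j * B2 F n₁ k i := by
  induction j using Fin.lastCases with
  | last =>
    induction i using Fin.cases with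
    | zero => rw [img_l0]; simp [A1, A2, B1, B2]
    | succ i => rw [img_ls]; simp [A1, A2, B1, B2]
  | cast j =>
    induction i using Fin.cases with
    | zero => rw [img_c0]; simp [A1, A2, B1, B2]
    | succ i => rw [img_cc]; simp [A1, A2, B1, B2]; ring

lemma φ_X (v) : φ F n₁ k (X v) = img F n₁ k v.1.1 v.1.2 := by
  simp [φ]

lemma φ_Z (j : Fin (k + 1)) (i : Fin (n₁ + 1)) : φ F n₁ k (Z F n₁ k j i) = img F n₁ k j i := by
  unfold Z
  split_ifs with h
  · rw [φ_X]
  · simp only [ne_eq, not_not, Prod.mk.injEq] at h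
    obtain ⟨rfl, rfl⟩ := h
    rw [map_zero, img_l0]

/-- The ideal of 3-minors. -/
noncomputable abbrev I3 : Ideal (Source F n₁ k) := Ideal.span { p : Source F n₁ k |
        ∃ (jv : Fin 3 → Fin (k + 1)) (iv : Fin 3 → Fin (n₁ + 1)),
          p = Matrix.det (Matrix.of fun a b => Z F n₁ k (jv a) (iv b)) }

lemma I3_le (f : Source F n₁ k) (hf : f ∈ I3 F n₁ k) : φ F n₁ k f = 0 := by
  have : I3 F n₁ k ≤ RingHom.ker (φ F n₁ k).toRingHom := by
    rw [Ideal.span_le]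
    rintro p ⟨jv, iv, rfl⟩
    simp only [SetLike.mem_coe, RingHom.mem_ker]
    change φ F n₁ k _ = 0
    simp only [Matrix.det_fin_three, Matrix.of_apply, map_sub, map_add, map_mul, φ_Z, img_eq]
    ring
  exact this hf

/-- row weight -/
noncomputable def rw' (j : Fin (k + 1)) : (Fin k ⊕ Fin n₁) →₀ ℕ :=
  Fin.lastCases (motive := fun _ => (Fin k ⊕ Fin n₁) →₀ ℕ) 0
    (fun j => Finsupp.single (Sum.inl j) 1) j

/-- column weight -/
noncomputable def cw' (i : Fin (n₁ + 1)) : (Fin k ⊕ Fin n₁) →₀ ℕ :=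
  Fin.cases (motive := fun _ => (Fin k ⊕ Fin n₁) →₀ ℕ) 0
    (fun i => Finsupp.single (Sum.inr i) 1) i

/-- The index type of variables. -/
abbrev V := {p : Fin (k + 1) × Fin (n₁ + 1) // p ≠ (Fin.last k, 0)}

/-- weight of a variable -/
noncomputable def wv (v : V n₁ k) : (Fin k ⊕ Fin n₁) →₀ ℕ := rw' n₁ k v.1.1 + cw' n₁ k v.1.2

/-- weight of a target variable -/
noncomputable def tw (v : (Fin n₁ ⊕ Fin k) ⊕ (Fin n₁ ⊕ Fin k)) : (Fin k ⊕ Fin n₁) →₀ ℕ :=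
  Finsupp.single (Sum.elim Sum.swap Sum.swap v) 1

/-- multigrading coaction on the source -/
noncomputable def τ : Source F n₁ k →ₐ[F] MvPolynomial (Fin k ⊕ Fin n₁) (Source F n₁ k) :=
  aeval (fun v => monomial (wv n₁ k v) (X v))

/-- multigrading coaction on the target -/
noncomputable def τT : Target F n₁ k →ₐ[F] MvPolynomial (Fin k ⊕ Fin n₁) (Target F n₁ k) :=
  aeval (fun v => monomial (tw n₁ k v) (X v))

lemma τT_img (j : Fin (k + 1)) (i : Fin (n₁ + 1)) : τT F n₁ k (img F n₁ k j i) =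
    monomial (rw' n₁ k j + cw' n₁ k i) (img F n₁ k j i) := by
  induction j using Fin.lastCases with
  | last =>
    induction i using Fin.cases with
    | zero => rw [img_l0]; simp
    | succ i => rw [img_ls]; simp [τT, rw', cw', tw]
  | cast j =>
    induction i using Fin.cases with
    | zero => rw [img_c0]; simp [τT, rw', cw', tw]
    | succ i =>
      rw [img_cc]
      simp only [τT, map_sub, map_mul, aeval_X, monomial_mul, tw, rw', cw', Sum.elim_inl,
        Sum.elim_inr, Sum.swap_inl, Sum.swap_inr, Fin.lastCases_castSucc, Fin.cases_succ]
      rw [add_comm (Finsupp.single (Sum.inr i) 1)]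

lemma τ_φ (f : Source F n₁ k) :
    τT F n₁ k (φ F n₁ k f) = MvPolynomial.map (φ F n₁ k).toRingHom (τ F n₁ k f) := by
  have : (τT F n₁ k).comp (φ F n₁ k) = (mapAlgHom (φ F n₁ k)).comp (τ F n₁ k) := by
    apply algHom_ext
    intro v
    simp only [AlgHom.comp_apply, φ_X, τT_img, τ, aeval_X, mapAlgHom_apply, map_monomial]
    simp [φ_X, wv, monomial_eq]
  exact DFunLike.congr_fun this f

lemma τ_monomial (m : V n₁ k →₀ ℕ) (c : F) : τ F n₁ k (monomial m c) =
    monomial (Finsupp.weight (wv n₁ k) m) (monomial m c) := by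
  have h1 : τ F n₁ k (monomial m 1) =
      monomial (Finsupp.weight (wv n₁ k) m) (monomial m 1) := by
    induction m using Finsupp.induction_linear with
    | zero => simp
    | add f g hf hg =>
      rw [map_add, ← one_mul (1 : F), ← monomial_mul, map_mul, hf, hg, monomial_mul]
    | single v e =>
      rw [Finsupp.weight_single, ← X_pow_eq_monomial, map_pow, τ, aeval_X, monomial_pow]
  have h2 : (monomial m c : Source F n₁ k) = c • monomial m 1 := by
    rw [smul_monomial, smul_eq_mul, mul_one]
  rw [h2, map_smul, h1, smul_monomial]

lemma coeff_τ (f : Source F n₁ k) (γ) (m : V n₁ k →₀ ℕ) :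
    coeff m (coeff γ (τ F n₁ k f)) = if Finsupp.weight (wv n₁ k) m = γ then coeff m f else 0 := by
  classical
  induction f using MvPolynomial.induction_on' with
  | monomial u a =>
    rw [τ_monomial]
    simp only [coeff_monomial]
    by_cases h : u = m
    · subst h
      split_ifs <;> simp_all
    · split_ifs <;> simp [h]
  | add p q hp hq =>
    rw [map_add, coeff_add, coeff_add, coeff_add, hp, hq]
    split_ifs <;> simp

lemma coeff_τ_ker (f : Source F n₁ k) (hf : φ F n₁ k f = 0) (γ) :
    φ F n₁ k (coeff γ (τ F n₁ k f)) = 0 := by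
  have := τ_φ F n₁ k f
  rw [hf, map_zero] at this
  have h2 := congrArg (coeff γ) this
  rw [coeff_map, coeff_zero] at h2
  exact h2.symm

lemma sum_coeff_τ (f : Source F n₁ k) :
    ∑ γ ∈ (τ F n₁ k f).support, coeff γ (τ F n₁ k f) = f := by
  classical
  ext m
  rw [coeff_sum]
  simp only [coeff_τ, Finset.sum_ite_eq]
  split_ifs with h
  · rfl
  · rw [notMem_support_iff] at h
    have := coeff_τ F n₁ k f (Finsupp.weight (wv n₁ k) m) m
    rw [h] at this
    simpa using this

lemma coeff_τ_weight (f : Source F n₁ k) (γ) (m : V n₁ k →₀ ℕ)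
    (hm : m ∈ (coeff γ (τ F n₁ k f)).support) : Finsupp.weight (wv n₁ k) m = γ := by
  rw [mem_support_iff, coeff_τ] at hm
  by_contra h
  simp [h] at hm

lemma τ_homog (f : Source F n₁ k) (γ) (h : ∀ m ∈ f.support, Finsupp.weight (wv n₁ k) m = γ) :
    τ F n₁ k f = monomial γ f := by
  classical
  conv_lhs => rw [f.as_sum]
  conv_rhs => rw [f.as_sum]
  rw [map_sum, map_sum]
  refine Finset.sum_congr rfl fun m hm => ?_
  rw [τ_monomial, h m hm]

section polarization

variable {n₁ k} {N D : ℕ} (r : Fin D → Fin k) (c : Fin N → Fin n₁)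

/-- extended row map -/
def rr (p : Fin (D + 1)) : Fin (k + 1) :=
  Fin.lastCases (motive := fun _ => Fin (k + 1)) (Fin.last k) (fun p => (r p).castSucc) p

/-- extended column map -/
def cc (q : Fin (N + 1)) : Fin (n₁ + 1) :=
  Fin.cases (motive := fun _ => Fin (n₁ + 1)) 0 (fun q => (c q).succ) q

lemma rr_last : rr r (Fin.last D) = Fin.last k := by simp [rr]

lemma rr_cast (p) : rr r (Fin.castSucc p) = (r p).castSucc := by simp [rr]

lemma cc_zero : cc c 0 = 0 := by simp [cc]

lemma cc_succ (q) : cc c (Fin.succ q) = (c q).succ := by simp [cc]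

lemma rr_eq_last (p) : rr r p = Fin.last k ↔ p = Fin.last D := by
  induction p using Fin.lastCases with
  | last => simp [rr_last]
  | cast p => simp [rr_cast, Fin.castSucc_ne_last]

lemma cc_eq_zero (q) : cc c q = 0 ↔ q = 0 := by
  induction q using Fin.cases with
  | zero => simp [cc_zero]
  | succ q => simp [cc_succ]

/-- map on variables -/
def πv (w : V N D) : V n₁ k := ⟨(rr r w.1.1, cc c w.1.2), by
  intro h
  rw [Prod.mk.injEq, rr_eq_last, cc_eq_zero] at h
  exact w.2 (Prod.ext h.1 h.2)⟩

/-- restitution -/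
noncomputable def ρ : Source F N D →ₐ[F] Source F n₁ k := rename (πv r c)

lemma ρ_Z (p q) : ρ F r c (Z F N D p q) = Z F n₁ k (rr r p) (cc c q) := by
  unfold Z
  by_cases h : (p, q) = (Fin.last D, 0)
  · have h' : (rr r p, cc c q) = (Fin.last k, 0) := by
      rw [Prod.mk.injEq] at h ⊢
      rwa [rr_eq_last, cc_eq_zero]
    rw [dif_neg (not_not.2 h), dif_neg (not_not.2 h'), map_zero]
  · have h' : (rr r p, cc c q) ≠ (Fin.last k, 0) := by
      rw [Ne, Prod.mk.injEq] at *
      rwa [rr_eq_last, cc_eq_zero]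
    rw [dif_pos h, dif_pos h', ρ, rename_X]
    rfl

lemma ρ_I3 (f) (hf : f ∈ I3 F N D) : ρ F r c f ∈ I3 F n₁ k := by
  have : I3 F N D ≤ (I3 F n₁ k).comap (ρ F r c) := by
    rw [Ideal.span_le]
    rintro p ⟨jv, iv, rfl⟩
    simp only [SetLike.mem_coe, Ideal.mem_comap]
    refine Ideal.subset_span ⟨fun a => rr r (jv a), fun a => cc c (iv a), ?_⟩
    simp only [Matrix.det_fin_three, Matrix.of_apply, map_sub, map_add, map_mul, ρ_Z]
  exact this hf

/-- polarization -/
noncomputable def Ψ : Source F n₁ k →ₐ[F] Source F N D :=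
  aeval fun v => ∑ p with rr r p = v.1.1, ∑ q with cc c q = v.1.2, Z F N D p q

/-- polarization on the target -/
noncomputable def ΨT : Target F n₁ k →ₐ[F] Target F N D :=
  aeval fun v => ∑ w with Sum.map (Sum.map c r) (Sum.map c r) w = v, X w

lemma sum_rr {M : Type*} [AddCommMonoid M] (f : Fin (D + 1) → M) (j : Fin k) :
    ∑ p with rr r p = j.castSucc, f p = ∑ p with r p = j, f p.castSucc := by
  rw [Finset.sum_filter, Finset.sum_filter, Fin.sum_univ_castSucc]
  simp [rr_last, rr_cast, (Fin.castSucc_ne_last j).symm]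

lemma sum_rr_last {M : Type*} [AddCommMonoid M] (f : Fin (D + 1) → M) :
    ∑ p with rr r p = Fin.last k, f p = f (Fin.last D) := by
  rw [Finset.sum_filter, Fin.sum_univ_castSucc]
  simp [rr_last, rr_cast, Fin.castSucc_ne_last]

lemma sum_cc {M : Type*} [AddCommMonoid M] (f : Fin (N + 1) → M) (j : Fin n₁) :
    ∑ p with cc c p = j.succ, f p = ∑ p with c p = j, f p.succ := by
  rw [Finset.sum_filter, Finset.sum_filter, Fin.sum_univ_succ]
  simp [cc_zero, cc_succ, (Fin.succ_ne_zero j).symm]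

lemma sum_cc_zero {M : Type*} [AddCommMonoid M] (f : Fin (N + 1) → M) :
    ∑ p with cc c p = 0, f p = f 0 := by
  rw [Finset.sum_filter, Fin.sum_univ_succ]
  simp [cc_zero, cc_succ]

lemma ΨT_A1 (j) : ΨT F r c (A1 F n₁ k j) = ∑ p with rr r p = j, A1 F N D p := by
  induction j using Fin.lastCases with
  | last => rw [sum_rr_last]; simp [A1]
  | cast j =>
    rw [sum_rr]
    simp [A1, ΨT, Finset.sum_filter, Fintype.sum_sum_type]

lemma ΨT_A2 (j) : ΨT F r c (A2 F n₁ k j) = ∑ p with rr r p = j, A2 F N D p := by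
  induction j using Fin.lastCases with
  | last => rw [sum_rr_last]; simp [A2]
  | cast j =>
    rw [sum_rr]
    simp [A2, ΨT, Finset.sum_filter, Fintype.sum_sum_type]

lemma ΨT_B1 (j) : ΨT F r c (B1 F n₁ k j) = ∑ p with cc c p = j, B1 F N D p := by
  induction j using Fin.cases with
  | zero => rw [sum_cc_zero]; simp [B1]
  | succ j =>
    rw [sum_cc]
    simp [B1, ΨT, Finset.sum_filter, Fintype.sum_sum_type]

lemma ΨT_B2 (j) : ΨT F r c (B2 F n₁ k j) = ∑ p with cc c p = j, B2 F N D p := by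
  induction j using Fin.cases with
  | zero => rw [sum_cc_zero]; simp [B2]
  | succ j =>
    rw [sum_cc]
    simp [B2, ΨT, Finset.sum_filter, Fintype.sum_sum_type, ← Finset.sum_neg_distrib, neg_ite]

lemma ΨT_img (j i) : ΨT F r c (img F n₁ k j i) =
    ∑ p with rr r p = j, ∑ q with cc c q = i, img F N D p q := by
  simp only [img_eq, map_add, map_mul, ΨT_A1, ΨT_A2, ΨT_B1, ΨT_B2, Finset.sum_mul_sum,
    Finset.sum_add_distrib]

lemma φ_Ψ (f) : φ F N D (Ψ F r c f) = ΨT F r c (φ F n₁ k f) := by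
  have : (φ F N D).comp (Ψ F r c) = (ΨT F r c).comp (φ F n₁ k) := by
    apply algHom_ext
    intro v
    simp only [AlgHom.comp_apply, φ_X, ΨT_img, Ψ, aeval_X, map_sum, φ_Z]
  exact DFunLike.congr_fun this f

lemma τ_Z (p q) : τ F N D (Z F N D p q) = monomial (rw' N D p + cw' N D q) (Z F N D p q) := by
  unfold Z
  split_ifs with h
  · rw [τ, aeval_X, wv]
  · simp

/-- the polarized linear forms -/
noncomputable def Λ (R : Type*) [CommSemiring R] (t : Fin k ⊕ Fin n₁) :
    MvPolynomial (Fin D ⊕ Fin N) R := ∑ s with Sum.map r c s = t, X s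

lemma Λ_row (R : Type*) [CommSemiring R] (j) :
    aeval (R := R) (Λ r c R) (monomial (rw' n₁ k j) (1 : R)) =
      ∑ p with rr r p = j, monomial (rw' N D p) (1 : R) := by
  induction j using Fin.lastCases with
  | last => rw [sum_rr_last]; simp [rw']
  | cast j =>
    rw [sum_rr]
    simp only [rw', Fin.lastCases_castSucc]
    change aeval (R := R) (Λ r c R) (X _) = ∑ p with r p = j, X _
    simp [Λ, Finset.sum_filter, Fintype.sum_sum_type]

lemma Λ_col (R : Type*) [CommSemiring R] (j) :
    aeval (R := R) (Λ r c R) (monomial (cw' n₁ k j) (1 : R)) =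
      ∑ p with cc c p = j, monomial (cw' N D p) (1 : R) := by
  induction j using Fin.cases with
  | zero => rw [sum_cc_zero]; simp [cw']
  | succ j =>
    rw [sum_cc]
    simp only [cw', Fin.cases_succ]
    change aeval (R := R) (Λ r c R) (X _) = ∑ p with c p = j, X _
    simp [Λ, Finset.sum_filter, Fintype.sum_sum_type]

lemma Z_self (v : V n₁ k) : Z F n₁ k v.1.1 v.1.2 = X v := by
  unfold Z
  rw [dif_pos v.2]

lemma ρ_τ_Ψ (f) : MvPolynomial.map (ρ F r c).toRingHom (τ F N D (Ψ F r c f)) =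
    aeval (R := Source F n₁ k) (Λ r c (Source F n₁ k)) (τ F n₁ k f) := by
  have : ((mapAlgHom (ρ F r c)).comp (τ F N D)).comp (Ψ F r c) =
      ((aeval (R := Source F n₁ k) (Λ r c (Source F n₁ k))).restrictScalars F).comp (τ F n₁ k) := by
    apply algHom_ext
    intro v
    simp only [AlgHom.comp_apply, AlgHom.restrictScalars_apply, mapAlgHom_apply]
    rw [τ, τ, aeval_X, Ψ, aeval_X]
    have e : (monomial (wv n₁ k v) (X v) : MvPolynomial (Fin k ⊕ Fin n₁) (Source F n₁ k)) =
      (X v : Source F n₁ k) • (monomial (rw' n₁ k v.1.1) 1 * monomial (cw' n₁ k v.1.2) 1) := by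
      rw [monomial_mul, smul_monomial, wv]; simp
    rw [e, map_smul, map_mul, Λ_row, Λ_col, Finset.sum_mul_sum]
    change mapAlgHom (ρ F r c) (τ F N D _) = _
    rw [map_sum, map_sum, Finset.smul_sum]
    refine Finset.sum_congr rfl fun p hp => ?_
    rw [map_sum, map_sum, Finset.smul_sum]
    refine Finset.sum_congr rfl fun q hq => ?_
    rw [Finset.mem_filter] at hp hq
    rw [τ_Z, mapAlgHom_apply]
    change MvPolynomial.map (ρ F r c).toRingHom _ = _
    rw [map_monomial, monomial_mul, smul_monomial]
    change monomial _ (ρ F r c _) = _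
    rw [ρ_Z, hp.2, hq.2, Z_self]
    simp
  exact DFunLike.congr_fun this f

end polarization

lemma coeff_prod_pos {σ ι : Type*} (s : Finset ι) (P : ι → MvPolynomial σ ℕ) (e : ι → σ →₀ ℕ)
    (h : ∀ i ∈ s, coeff (e i) (P i) ≠ 0) : coeff (∑ i ∈ s, e i) (∏ i ∈ s, P i) ≠ 0 := by
  classical
  induction s using Finset.induction_on with
  | empty => simp
  | insert a s ha ih =>
    rw [Finset.sum_insert ha, Finset.prod_insert ha, coeff_mul]
    have h1 := h a (Finset.mem_insert_self a s)
    have h2 := ih fun i hi => h i (Finset.mem_insert_of_mem hi)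
    rw [Ne, Finset.sum_eq_zero_iff]
    push Not
    exact ⟨(e a, ∑ i ∈ s, e i), by simp, mul_ne_zero h1 h2⟩

/-- all-ones multidegree -/
noncomputable def ones (N D : ℕ) : (Fin D ⊕ Fin N) →₀ ℕ := ∑ s, Finsupp.single s 1

lemma card_fiber {k : ℕ} (d : Fin k → ℕ) (j : Fin k) :
    (Finset.univ.filter fun p : Fin (∑ j, d j) => (finSigmaFinEquiv.symm p).1 = j).card = d j := by
  classical
  rw [← Fintype.card_subtype]
  have e : {p : Fin (∑ j, d j) // (finSigmaFinEquiv.symm p).1 = j} ≃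
      {p : (Σ j : Fin k, Fin (d j)) // p.1 = j} :=
    finSigmaFinEquiv.symm.subtypeEquiv (fun _ => Iff.rfl)
  rw [Fintype.card_congr (e.trans (Equiv.sigmaSubtype j)), Fintype.card_fin]

lemma exists_polar (δ : (Fin k ⊕ Fin n₁) →₀ ℕ) : ∃ (D N : ℕ) (r : Fin D → Fin k)
    (c : Fin N → Fin n₁),
    coeff (ones N D) (aeval (R := ℕ) (Λ r c ℕ) (monomial δ (1 : ℕ))) ≠ 0 := by
  classical
  refine ⟨∑ j, δ (Sum.inl j), ∑ i, δ (Sum.inr i),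
    fun p => (finSigmaFinEquiv.symm p).1, fun q => (finSigmaFinEquiv.symm q).1, ?_⟩
  set r : Fin (∑ j, δ (Sum.inl j)) → Fin k := fun p => (finSigmaFinEquiv.symm p).1 with hr
  set c : Fin (∑ i, δ (Sum.inr i)) → Fin n₁ := fun q => (finSigmaFinEquiv.symm q).1 with hc
  have key : aeval (R := ℕ) (Λ r c ℕ) (monomial δ (1 : ℕ)) = ∏ s, Λ r c ℕ (Sum.map r c s) := by
    rw [aeval_monomial, map_one, one_mul, Finsupp.prod_fintype _ _ (by simp),
      Fintype.prod_sum_type, Fintype.prod_sum_type]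
    congr 1
    · simp only [Sum.map_inl]
      rw [← Finset.prod_fiberwise' Finset.univ r (fun j => Λ r c ℕ (Sum.inl j))]
      refine Finset.prod_congr rfl fun j _ => ?_
      rw [Finset.prod_const, card_fiber (fun j => δ (Sum.inl j))]
    · simp only [Sum.map_inr]
      rw [← Finset.prod_fiberwise' Finset.univ c (fun j => Λ r c ℕ (Sum.inr j))]
      refine Finset.prod_congr rfl fun j _ => ?_
      rw [Finset.prod_const, card_fiber (fun j => δ (Sum.inr j))]
  rw [key, ones]
  apply coeff_prod_pos
  intro s _
  rw [Λ, coeff_sum, Ne, Finset.sum_eq_zero_iff]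
  push Not
  exact ⟨s, by simp, by simp⟩

lemma coeff_Λ {N D : ℕ} (r : Fin D → Fin k) (c : Fin N → Fin n₁) (R : Type*) [CommRing R]
    (δ γ) (f : R) : coeff γ (aeval (R := R) (Λ r c R) (monomial δ f)) =
      f * ((coeff γ (aeval (R := ℕ) (Λ r c ℕ) (monomial δ (1 : ℕ))) : ℕ) : R) := by
  have h1 : aeval (R := R) (Λ r c R) (monomial δ f) =
      f • MvPolynomial.map (Nat.castRingHom R)
        (aeval (R := ℕ) (Λ r c ℕ) (monomial δ (1 : ℕ))) := by
    rw [aeval_monomial, aeval_monomial, map_one, one_mul, Finsupp.prod, Finsupp.prod, map_prod,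
      algebraMap_eq, C_mul']
    congr 1
    refine Finset.prod_congr rfl fun t _ => ?_
    rw [map_pow]
    congr 1
    simp [Λ]
  rw [h1, coeff_smul, coeff_map, smul_eq_mul]
  rfl

lemma reduction (hML : ∀ (N D : ℕ) (g : Source F N D), φ F N D g = 0 →
      (∀ m ∈ g.support, Finsupp.weight (wv N D) m = ones N D) → g ∈ I3 F N D)
    (f : Source F n₁ k) (hf : φ F n₁ k f = 0) : f ∈ I3 F n₁ k := by
  rw [← sum_coeff_τ F n₁ k f]
  refine Ideal.sum_mem _ fun δ _ => ?_
  have h1 := coeff_τ_ker F n₁ k f hf δ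
  have h2 := coeff_τ_weight F n₁ k f δ
  generalize coeff δ (τ F n₁ k f) = f' at h1 h2
  obtain ⟨D, N, r, c, hκ⟩ := exists_polar n₁ k δ
  have h3 : φ F N D (Ψ F r c f') = 0 := by rw [φ_Ψ, h1, map_zero]
  have h4 := hML N D _ (coeff_τ_ker F N D _ h3 (ones N D)) (coeff_τ_weight F N D _ (ones N D))
  have h5 := ρ_I3 F r c _ h4
  have h6 := congrArg (coeff (ones N D)) (ρ_τ_Ψ F r c f')
  rw [coeff_map, τ_homog F n₁ k f' δ h2, coeff_Λ] at h6
  change ρ F r c _ = _ at h6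
  rw [h6] at h5
  generalize coeff (ones N D) (aeval (R := ℕ) (Λ r c ℕ) (monomial δ (1 : ℕ))) = κ at *
  have h7 := Ideal.mul_mem_right (C ((κ : F)⁻¹)) _ h5
  have h8 : (f' * (κ : Source F n₁ k)) * C ((κ : F)⁻¹) = f' := by
    rw [mul_assoc, ← map_natCast (C (R := F)), ← C_mul, mul_inv_cancel₀ (by exact_mod_cast hκ),
      C_1, mul_one]
  rwa [h8] at h7

/-- standard monomials: no diagonal triple. -/
def StdM (m : V n₁ k →₀ ℕ) : Prop := ∀ v1 v2 v3 : V n₁ k, v1.1.1 < v2.1.1 → v2.1.1 < v3.1.1 →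
  v1.1.2 < v2.1.2 → v2.1.2 < v3.1.2 → m v1 ≠ 0 → m v2 ≠ 0 → m v3 ≠ 0 → False

/-- the termination weight -/
noncomputable def W : (V n₁ k →₀ ℕ) →+ ℕ :=
  Finsupp.weight (fun v : V n₁ k => (v.1.1 : ℕ) * (v.1.2 : ℕ))

lemma zzz (m0 : V n₁ k →₀ ℕ) (x1 x2 x3 : Fin (k + 1)) (y1 y2 y3 : Fin (n₁ + 1)) :
    (monomial m0 (1 : F) * (Z F n₁ k x1 y1 * Z F n₁ k x2 y2 * Z F n₁ k x3 y3) = 0) ∨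
    ∃ m', monomial m0 (1 : F) * (Z F n₁ k x1 y1 * Z F n₁ k x2 y2 * Z F n₁ k x3 y3) =
        monomial m' 1 ∧
      Finsupp.weight (wv n₁ k) m' = Finsupp.weight (wv n₁ k) m0 +
        (rw' n₁ k x1 + rw' n₁ k x2 + rw' n₁ k x3 + (cw' n₁ k y1 + cw' n₁ k y2 + cw' n₁ k y3)) ∧
      W n₁ k m' = W n₁ k m0 + ((x1 : ℕ) * y1 + (x2 : ℕ) * y2 + (x3 : ℕ) * y3) := by
  by_cases h1 : (x1, y1) = (Fin.last k, 0)
  · left; simp only [Z, h1]; simp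
  by_cases h2 : (x2, y2) = (Fin.last k, 0)
  · left; simp only [Z, h2]; simp
  by_cases h3 : (x3, y3) = (Fin.last k, 0)
  · left; simp only [Z, h3]; simp
  right
  refine ⟨m0 + (Finsupp.single ⟨(x1, y1), h1⟩ 1 + Finsupp.single ⟨(x2, y2), h2⟩ 1 +
    Finsupp.single ⟨(x3, y3), h3⟩ 1), ?_, ?_, ?_⟩
  · unfold Z
    rw [dif_pos h1, dif_pos h2, dif_pos h3]
    simp only [X, monomial_mul, mul_one]
  · simp only [map_add, Finsupp.weight_single, one_smul, wv]
    abel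
  · simp only [W, map_add, Finsupp.weight_single, one_smul]

/-- standard monomials of weight γ plus the ideal -/
noncomputable def NN (γ : (Fin k ⊕ Fin n₁) →₀ ℕ) : Submodule F (Source F n₁ k) :=
  Submodule.span F ((fun e => monomial e (1 : F)) ''
    {e | Finsupp.weight (wv n₁ k) e = γ ∧ StdM n₁ k e}) ⊔ (I3 F n₁ k).restrictScalars F

lemma spanning (γ) (w : ℕ) : ∀ m : V n₁ k →₀ ℕ, W n₁ k m = w → Finsupp.weight (wv n₁ k) m = γ →
    (monomial m (1 : F) : Source F n₁ k) ∈ NN F n₁ k γ := by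
  induction w using Nat.strong_induction_on with
  | _ w ih =>
  intro m hw hm
  by_cases hs : StdM n₁ k m
  · exact Submodule.mem_sup_left (Submodule.subset_span ⟨m, ⟨hm, hs⟩, rfl⟩)
  unfold StdM at hs
  push Not at hs
  obtain ⟨v1, v2, v3, a12, a23, b12, b23, m1, m2, m3, -⟩ := hs
  have hle : Finsupp.single v1 1 + Finsupp.single v2 1 + Finsupp.single v3 1 ≤ m := by
    classical
    have n12 : v1 ≠ v2 := by rintro rfl; exact lt_irrefl _ a12
    have n23 : v2 ≠ v3 := by rintro rfl; exact lt_irrefl _ a23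
    have n13 : v1 ≠ v3 := by rintro rfl; exact lt_irrefl _ (a12.trans a23)
    intro v
    simp only [Finsupp.add_apply, Finsupp.single_apply]
    by_cases e1 : v1 = v
    · subst e1; simp [n12.symm, n13.symm]; omega
    by_cases e2 : v2 = v
    · subst e2; simp [n12, n23.symm]; omega
    by_cases e3 : v3 = v
    · subst e3; simp [n13, n23]; omega
    simp [e1, e2, e3]
  obtain ⟨m0, rfl⟩ : ∃ m0, m = m0 + (Finsupp.single v1 1 + Finsupp.single v2 1 +
      Finsupp.single v3 1) := ⟨_, (tsub_add_cancel_of_le hle).symm⟩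
  obtain ⟨⟨x1, y1⟩, h1⟩ := v1
  obtain ⟨⟨x2, y2⟩, h2⟩ := v2
  obtain ⟨⟨x3, y3⟩, h3⟩ := v3
  simp only at a12 a23 b12 b23
  have hlead : monomial m0 (1 : F) * (Z F n₁ k x1 y1 * Z F n₁ k x2 y2 * Z F n₁ k x3 y3) =
      monomial (m0 + (Finsupp.single ⟨(x1, y1), h1⟩ 1 + Finsupp.single ⟨(x2, y2), h2⟩ 1 +
    Finsupp.single ⟨(x3, y3), h3⟩ 1)) 1 := by
    unfold Z
    rw [dif_pos h1, dif_pos h2, dif_pos h3]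
    simp only [X, monomial_mul, mul_one]
  have hT : ∀ z1 z2 z3, cw' n₁ k z1 + cw' n₁ k z2 + cw' n₁ k z3 =
      cw' n₁ k y1 + cw' n₁ k y2 + cw' n₁ k y3 →
      (x1 : ℕ) * z1 + (x2 : ℕ) * z2 + (x3 : ℕ) * z3 <
        (x1 : ℕ) * y1 + (x2 : ℕ) * y2 + (x3 : ℕ) * y3 →
      monomial m0 (1 : F) * (Z F n₁ k x1 z1 * Z F n₁ k x2 z2 * Z F n₁ k x3 z3) ∈
        NN F n₁ k γ := by
    intro z1 z2 z3 hz hlt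
    rcases zzz F n₁ k m0 x1 x2 x3 z1 z2 z3 with h | ⟨m', e, hw1, hw2⟩
    · rw [h]; exact Submodule.zero_mem _
    · rw [e]
      refine ih _ ?_ m' rfl ?_
      · rw [hw2, ← hw]
        simp only [W, map_add, Finsupp.weight_single, one_smul]
        simp only [W] at *
        omega
      · rw [hw1, ← hm, hz]
        simp only [map_add, Finsupp.weight_single, one_smul, wv]
        abel
  have hdet : monomial m0 (1 : F) * Matrix.det (Matrix.of fun a b =>
      Z F n₁ k (![x1, x2, x3] a) (![y1, y2, y3] b)) ∈ NN F n₁ k γ := by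
    apply Submodule.mem_sup_right
    rw [Submodule.restrictScalars_mem]
    exact Ideal.mul_mem_left _ _ (Ideal.subset_span ⟨_, _, rfl⟩)
  have e : (monomial (m0 + (Finsupp.single ⟨(x1, y1), h1⟩ 1 + Finsupp.single ⟨(x2, y2), h2⟩ 1 +
    Finsupp.single ⟨(x3, y3), h3⟩ 1)) (1 : F) : Source F n₁ k) =
      monomial m0 (1 : F) * Matrix.det (Matrix.of fun a b =>
        Z F n₁ k (![x1, x2, x3] a) (![y1, y2, y3] b))
      + monomial m0 (1 : F) * (Z F n₁ k x1 y1 * Z F n₁ k x2 y3 * Z F n₁ k x3 y2)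
      + monomial m0 (1 : F) * (Z F n₁ k x1 y2 * Z F n₁ k x2 y1 * Z F n₁ k x3 y3)
      - monomial m0 (1 : F) * (Z F n₁ k x1 y2 * Z F n₁ k x2 y3 * Z F n₁ k x3 y1)
      - monomial m0 (1 : F) * (Z F n₁ k x1 y3 * Z F n₁ k x2 y1 * Z F n₁ k x3 y2)
      + monomial m0 (1 : F) * (Z F n₁ k x1 y3 * Z F n₁ k x2 y2 * Z F n₁ k x3 y1) := by
    rw [← hlead]
    simp only [Matrix.det_fin_three, Matrix.of_apply, Matrix.cons_val]
    ring
  rw [e]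
  have A12 : (x1 : ℕ) < x2 := a12
  have A23 : (x2 : ℕ) < x3 := a23
  have B12 : (y1 : ℕ) < y2 := b12
  have B23 : (y2 : ℕ) < y3 := b23
  obtain ⟨s, hs⟩ := Nat.exists_eq_add_of_lt A12
  obtain ⟨t, ht⟩ := Nat.exists_eq_add_of_lt A23
  obtain ⟨s', hs'⟩ := Nat.exists_eq_add_of_lt B12
  obtain ⟨t', ht'⟩ := Nat.exists_eq_add_of_lt B23
  refine Submodule.add_mem _ (Submodule.sub_mem _ (Submodule.sub_mem _ (Submodule.add_mem _
    (Submodule.add_mem _ hdet (hT _ _ _ (by abel) ?_)) (hT _ _ _ (by abel) ?_))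
    (hT _ _ _ (by abel) ?_)) (hT _ _ _ (by abel) ?_)) (hT _ _ _ (by abel) ?_)
  all_goals
    rw [ht, hs, ht', hs']
    generalize (x1 : ℕ) = a
    generalize (y1 : ℕ) = b
    nlinarith [Nat.zero_le (s * s'), Nat.zero_le (s * t'), Nat.zero_le (t * s'),
      Nat.zero_le (t * t')]

/-- `e` is the leading exponent of `P` for the weight `ω`. -/
def Lead {σ R : Type*} [CommRing R] (ω : σ → ℕ) (P : MvPolynomial σ R) (e : σ →₀ ℕ) : Prop :=
  coeff e P ≠ 0 ∧ ∀ e', coeff e' P ≠ 0 → e' = e ∨ Finsupp.weight ω e' < Finsupp.weight ω e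

lemma Lead.one {σ R : Type*} [CommRing R] [Nontrivial R] (ω : σ → ℕ) :
    Lead ω (1 : MvPolynomial σ R) 0 := by
  classical
  refine ⟨by simp, fun e' h => ?_⟩
  rw [coeff_one] at h
  left
  by_contra h'
  simp [Ne.symm h'] at h

lemma Lead.mul {σ R : Type*} [CommRing R] [IsDomain R] {ω : σ → ℕ} {P Q : MvPolynomial σ R} {e f}
    (hP : Lead ω P e) (hQ : Lead ω Q f) : Lead ω (P * Q) (e + f) := by
  classical
  constructor
  · rw [coeff_mul, Finset.sum_eq_single (e, f)]
    · exact mul_ne_zero hP.1 hQ.1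
    · rintro ⟨a, b⟩ hab hne
      rw [Finset.HasAntidiagonal.mem_antidiagonal] at hab
      simp only at hab
      by_contra h
      have h1 := hP.2 a (left_ne_zero_of_mul h)
      have h2 := hQ.2 b (right_ne_zero_of_mul h)
      have h3 := congrArg (Finsupp.weight ω) hab
      rw [map_add, map_add] at h3
      rcases h1 with rfl | h1
      · rcases h2 with rfl | h2
        · exact hne rfl
        · omega
      · rcases h2 with rfl | h2 <;> omega
    · simp
  · intro e' he'
    rw [coeff_mul] at he'
    obtain ⟨⟨a, b⟩, hab, h⟩ := Finset.exists_ne_zero_of_sum_ne_zero he'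
    rw [Finset.HasAntidiagonal.mem_antidiagonal] at hab
    simp only at hab
    have h1 := hP.2 a (left_ne_zero_of_mul h)
    have h2 := hQ.2 b (right_ne_zero_of_mul h)
    rw [← hab, map_add, map_add]
    rcases h1 with rfl | h1
    · rcases h2 with rfl | h2
      · exact Or.inl rfl
      · right; omega
    · right
      rcases h2 with rfl | h2 <;> omega

lemma Lead.pow {σ R : Type*} [CommRing R] [IsDomain R] {ω : σ → ℕ} {P : MvPolynomial σ R} {e}
    (hP : Lead ω P e) (a : ℕ) : Lead ω (P ^ a) (a • e) := by
  induction a with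
  | zero => simpa using Lead.one ω
  | succ a ih => rw [pow_succ, succ_nsmul]; exact ih.mul hP

lemma Lead.mono {σ R : Type*} [CommRing R] (ω : σ → ℕ) (e : σ →₀ ℕ) {a : R} (ha : a ≠ 0) :
    Lead ω (monomial e a) e := by
  classical
  refine ⟨by simpa using ha, fun e' h => ?_⟩
  left
  rw [coeff_monomial] at h
  by_contra h'
  simp [Ne.symm h'] at h

lemma Lead.add_lower {σ R : Type*} [CommRing R] (ω : σ → ℕ) (e f : σ →₀ ℕ) {a : R} (ha : a ≠ 0)
    (b : R) (h : Finsupp.weight ω f < Finsupp.weight ω e) :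
    Lead ω (monomial e a + monomial f b) e := by
  classical
  have hne : f ≠ e := by rintro rfl; exact lt_irrefl _ h
  refine ⟨by simpa [coeff_monomial, hne] using ha, fun e' h' => ?_⟩
  rw [coeff_add, coeff_monomial, coeff_monomial] at h'
  by_cases h1 : e = e'
  · exact Or.inl h1.symm
  by_cases h2 : f = e'
  · subst h2; exact Or.inr h
  simp [h1, h2] at h'

/-- weights on the target variables -/
def om (v : (Fin n₁ ⊕ Fin k) ⊕ (Fin n₁ ⊕ Fin k)) : ℕ :=
  Sum.elim (Sum.elim (fun _ : Fin n₁ => 0) (fun j : Fin k => 2 * (j : ℕ) + 1))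
    (Sum.elim (fun i : Fin n₁ => 2 * (n₁ - 1 - (i : ℕ))) (fun _ : Fin k => 0)) v

/-- leading exponent of `img j i` -/
noncomputable def tl (v : V n₁ k) : (Fin n₁ ⊕ Fin k) ⊕ (Fin n₁ ⊕ Fin k) →₀ ℕ :=
  Fin.lastCases (motive := fun _ => (Fin n₁ ⊕ Fin k) ⊕ (Fin n₁ ⊕ Fin k) →₀ ℕ)
    (Fin.cases (motive := fun _ => (Fin n₁ ⊕ Fin k) ⊕ (Fin n₁ ⊕ Fin k) →₀ ℕ) 0
      (fun i => Finsupp.single (Sum.inl (Sum.inl i)) 1) v.1.2)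
    (fun j => Fin.cases (motive := fun _ => (Fin n₁ ⊕ Fin k) ⊕ (Fin n₁ ⊕ Fin k) →₀ ℕ)
      (Finsupp.single (Sum.inr (Sum.inr j)) 1)
      (fun i => if n₁ ≤ (j : ℕ) + i + 1 then
        Finsupp.single (Sum.inl (Sum.inl i)) 1 + Finsupp.single (Sum.inl (Sum.inr j)) 1
        else Finsupp.single (Sum.inr (Sum.inl i)) 1 + Finsupp.single (Sum.inr (Sum.inr j)) 1)
      v.1.2) v.1.1

lemma lead_X (v : V n₁ k) : Lead (om n₁ k) (φ F n₁ k (X v)) (tl n₁ k v) := by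
  rw [φ_X]
  obtain ⟨⟨j, i⟩, hv⟩ := v
  simp only [tl]
  induction j using Fin.lastCases with
  | last =>
    induction i using Fin.cases with
    | zero => exact absurd rfl hv
    | succ i =>
      rw [img_ls]
      simp only [Fin.lastCases_last, Fin.cases_succ]
      exact Lead.mono _ _ one_ne_zero
  | cast j =>
    induction i using Fin.cases with
    | zero =>
      rw [img_c0]
      simp only [Fin.lastCases_castSucc, Fin.cases_zero]
      exact Lead.mono _ _ one_ne_zero
    | succ i =>
      rw [img_cc]
      simp only [Fin.lastCases_castSucc, Fin.cases_succ]
      have hi := i.2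
      split_ifs with h
      · have e : (X (Sum.inl (Sum.inl i)) * X (Sum.inl (Sum.inr j)) -
          X (Sum.inr (Sum.inl i)) * X (Sum.inr (Sum.inr j)) : Target F n₁ k) =
          monomial (Finsupp.single (Sum.inl (Sum.inl i)) 1 +
            Finsupp.single (Sum.inl (Sum.inr j)) 1) 1 +
          monomial (Finsupp.single (Sum.inr (Sum.inl i)) 1 +
            Finsupp.single (Sum.inr (Sum.inr j)) 1) (-1) := by
          rw [map_neg, ← sub_eq_add_neg]
          simp only [X, monomial_mul, mul_one]
        rw [e]
        apply Lead.add_lower _ _ _ one_ne_zero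
        simp only [map_add, Finsupp.weight_single, om, Sum.elim_inl, Sum.elim_inr, one_smul]
        omega
      · have e : (X (Sum.inl (Sum.inl i)) * X (Sum.inl (Sum.inr j)) -
          X (Sum.inr (Sum.inl i)) * X (Sum.inr (Sum.inr j)) : Target F n₁ k) =
          monomial (Finsupp.single (Sum.inr (Sum.inl i)) 1 +
            Finsupp.single (Sum.inr (Sum.inr j)) 1) (-1) +
          monomial (Finsupp.single (Sum.inl (Sum.inl i)) 1 +
            Finsupp.single (Sum.inl (Sum.inr j)) 1) 1 := by
          rw [map_neg, neg_add_eq_sub]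
          simp only [X, monomial_mul, mul_one]
        rw [e]
        apply Lead.add_lower _ _ _ (neg_ne_zero.mpr one_ne_zero)
        simp only [map_add, Finsupp.weight_single, om, Sum.elim_inl, Sum.elim_inr, one_smul]
        omega

lemma lead_mono (m : V n₁ k →₀ ℕ) :
    Lead (om n₁ k) (φ F n₁ k (monomial m 1)) (Finsupp.weight (tl n₁ k) m) := by
  induction m using Finsupp.induction_linear with
  | zero => simpa using Lead.one _
  | add f g hf hg =>
    rw [map_add, ← one_mul (1 : F), ← monomial_mul, map_mul]
    exact hf.mul hg
  | single v e =>
    rw [Finsupp.weight_single, ← X_pow_eq_monomial, map_pow]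
    exact (lead_X F n₁ k v).pow e

lemma indep (S : Set (V n₁ k →₀ ℕ)) (hS : Set.InjOn (Finsupp.weight (tl n₁ k)) S)
    (s : Source F n₁ k) (hs : ∀ m ∈ s.support, m ∈ S) (h0 : φ F n₁ k s = 0) : s = 0 := by
  classical
  by_contra hne
  have hne' : s.support.Nonempty := by rwa [support_nonempty]
  obtain ⟨m, hm, hmax⟩ := Finset.exists_max_image s.support
    (fun e => Finsupp.weight (om n₁ k) (Finsupp.weight (tl n₁ k) e)) hne'
  have h1 : φ F n₁ k s = ∑ e ∈ s.support, (coeff e s) • φ F n₁ k (monomial e 1) := by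
    conv_lhs => rw [s.as_sum]
    rw [map_sum]
    refine Finset.sum_congr rfl fun e _ => ?_
    rw [← map_smul, smul_monomial, smul_eq_mul, mul_one]
  have h2 := congrArg (coeff (Finsupp.weight (tl n₁ k) m)) h1
  rw [h0, coeff_zero, coeff_sum, Finset.sum_eq_single m] at h2
  · rw [coeff_smul, smul_eq_mul] at h2
    exact mul_ne_zero (mem_support_iff.mp hm) (lead_mono F n₁ k m).1 h2.symm
  · intro e he hem
    rw [coeff_smul, smul_eq_mul]
    by_contra hc
    rcases (lead_mono F n₁ k e).2 _ (right_ne_zero_of_mul hc) with h | h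
    · exact hem (hS (hs e he) (hs m hm) h.symm)
    · exact absurd (hmax e he) (not_le.mpr h)
  · exact fun h => absurd hm h


lemma sum_ind {ι : Type*} [Fintype ι] (P : ι → Prop) [DecidablePred P] (m : ι → ℕ)
    (h : ∑ v, m v * (if P v then 1 else 0) = 1) :
    ∃ v, P v ∧ m v = 1 ∧ ∀ w, P w → m w ≠ 0 → w = v := by
  classical
  obtain ⟨v, -, hv⟩ := Finset.exists_ne_zero_of_sum_ne_zero (by rw [h]; exact one_ne_zero)
  have hP : P v := by
    by_contra hP
    simp [hP] at hv
  have h1 : m v ≠ 0 := left_ne_zero_of_mul hv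
  rw [← Finset.add_sum_erase _ _ (Finset.mem_univ v)] at h
  simp only [hP, if_true, mul_one] at h
  have h2 : m v = 1 := by omega
  refine ⟨v, hP, h2, fun w hw hmw => ?_⟩
  by_contra hne
  have h3 : ∑ v ∈ Finset.univ.erase v, m v * (if P v then 1 else 0) = 0 := by omega
  have h4 := (Finset.sum_eq_zero_iff.mp h3) w (by simp [hne])
  simp [hw] at h4
  exact hmw h4

lemma wv_inl (v : V n₁ k) (j : Fin k) :
    wv n₁ k v (Sum.inl j) = if (v.1.1 : ℕ) = j then 1 else 0 := by
  classical
  obtain ⟨⟨a, b⟩, hv⟩ := v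
  simp only [wv, rw', cw']
  have hj := j.2
  induction a using Fin.lastCases with
  | last =>
    induction b using Fin.cases with
    | zero => exact absurd rfl hv
    | succ i => simp [hj.ne']
  | cast a =>
    induction b using Fin.cases with
    | zero => simp [Finsupp.single_apply, Fin.ext_iff]
    | succ i => simp [Finsupp.single_apply, Fin.ext_iff]

lemma wv_inr (v : V n₁ k) (i : Fin n₁) :
    wv n₁ k v (Sum.inr i) = if (v.1.2 : ℕ) = i + 1 then 1 else 0 := by
  classical
  obtain ⟨⟨a, b⟩, hv⟩ := v
  simp only [wv, rw', cw']
  induction a using Fin.lastCases with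
  | last =>
    induction b using Fin.cases with
    | zero => exact absurd rfl hv
    | succ b => simp [Finsupp.single_apply, Fin.ext_iff]
  | cast a =>
    induction b using Fin.cases with
    | zero => simp
    | succ b => simp [Finsupp.single_apply, Fin.ext_iff]

lemma ones_apply (t : Fin k ⊕ Fin n₁) : ones n₁ k t = 1 := by
  classical
  rw [ones, Finsupp.finsetSum_apply, Finset.sum_eq_single t]
  · simp
  · intro b _ hb
    exact Finsupp.single_eq_of_ne hb.symm
  · simp

lemma weight_apply' {σ τ : Type*} [Fintype σ] (w : σ → (τ →₀ ℕ)) (m : σ →₀ ℕ) (t : τ) :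
    Finsupp.weight w m t = ∑ v, m v * w v t := by
  rw [Finsupp.weight_apply, Finsupp.sum_fintype _ _ (by simp), Finsupp.finsetSum_apply]
  simp

lemma row_fact {m : V n₁ k →₀ ℕ} (h : Finsupp.weight (wv n₁ k) m = ones n₁ k) (p : ℕ)
    (hp : p < k) : ∃ v : V n₁ k, (v.1.1 : ℕ) = p ∧ m v = 1 ∧
      ∀ w : V n₁ k, (w.1.1 : ℕ) = p → m w ≠ 0 → w = v := by
  have h1 := DFunLike.congr_fun h (Sum.inl ⟨p, hp⟩)
  rw [ones_apply, weight_apply'] at h1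
  simp only [wv_inl] at h1
  exact sum_ind (fun v : V n₁ k => (v.1.1 : ℕ) = p) m h1

lemma col_fact {m : V n₁ k →₀ ℕ} (h : Finsupp.weight (wv n₁ k) m = ones n₁ k) (i : ℕ)
    (hi0 : 1 ≤ i) (hi : i ≤ n₁) : ∃ v : V n₁ k, (v.1.2 : ℕ) = i ∧ m v = 1 ∧
      ∀ w : V n₁ k, (w.1.2 : ℕ) = i → m w ≠ 0 → w = v := by
  have h1 := DFunLike.congr_fun h (Sum.inr ⟨i - 1, by omega⟩)
  rw [ones_apply, weight_apply'] at h1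
  simp only [wv_inr, Nat.sub_add_cancel hi0] at h1
  exact sum_ind (fun v : V n₁ k => (v.1.2 : ℕ) = i) m h1

/-- The partial matching on the interior block. -/
def EE (m : V n₁ k →₀ ℕ) (p q : ℕ) : Prop :=
  ∃ v : V n₁ k, m v ≠ 0 ∧ (v.1.1 : ℕ) = p ∧ p < k ∧ (v.1.2 : ℕ) + q = n₁ ∧ q < n₁

lemma EE_row {m : V n₁ k →₀ ℕ} (h : Finsupp.weight (wv n₁ k) m = ones n₁ k) (p q q' : ℕ)
    (h1 : EE n₁ k m p q) (h2 : EE n₁ k m p q') : q = q' := by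
  obtain ⟨v, a1, a2, a3, a4, a5⟩ := h1
  obtain ⟨w, b1, b2, b3, b4, b5⟩ := h2
  obtain ⟨u, -, -, hu⟩ := row_fact n₁ k h p a3
  have : v = w := (hu v a2 a1).trans (hu w b2 b1).symm
  subst this
  omega

lemma EE_col {m : V n₁ k →₀ ℕ} (h : Finsupp.weight (wv n₁ k) m = ones n₁ k) (p p' q : ℕ)
    (h1 : EE n₁ k m p q) (h2 : EE n₁ k m p' q) : p = p' := by
  obtain ⟨v, a1, a2, a3, a4, a5⟩ := h1
  obtain ⟨w, b1, b2, b3, b4, b5⟩ := h2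
  obtain ⟨u, -, -, hu⟩ := col_fact n₁ k h (n₁ - q) (by omega) (by omega)
  have : v = w := (hu v (by omega) a1).trans (hu w (by omega) b1).symm
  subst this
  omega

lemma EE_std {m : V n₁ k →₀ ℕ} (h : Finsupp.weight (wv n₁ k) m = ones n₁ k)
    (hs : StdM n₁ k m) : StdRel (EE n₁ k m) := by
  rintro p q ⟨v, a1, a2, a3, a4, a5⟩ ⟨p1, hp1, h1⟩ ⟨q1, hq1, h2⟩
  obtain ⟨u, hu1, hu2, -⟩ := row_fact n₁ k h p1 (by omega)
  obtain ⟨w, hw1, hw2, -⟩ := col_fact n₁ k h (n₁ - q1) (by omega) (by omega)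
  have e1 : (u.1.2 : ℕ) < v.1.2 := by
    by_contra hc
    have := u.1.2.2
    exact h1 (n₁ - u.1.2) (by omega) ⟨u, by omega, hu1, by omega, by omega, by omega⟩
  have e2 : (v.1.1 : ℕ) < w.1.1 := by
    by_contra hc
    exact h2 w.1.1 (by omega) ⟨w, by omega, rfl, by omega, by omega, by omega⟩
  refine hs u v w ?_ ?_ ?_ ?_ (by omega) a1 (by omega) <;> rw [Fin.lt_def] <;> omega

lemma weight_ne {σ τ : Type*} [Fintype σ] (w : σ → (τ →₀ ℕ)) (m : σ →₀ ℕ) (t : τ) :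
    Finsupp.weight w m t ≠ 0 ↔ ∃ v, m v ≠ 0 ∧ w v t ≠ 0 := by
  rw [weight_apply', Ne, Finset.sum_eq_zero_iff]
  simp [not_or]

lemma tl_x (v : V n₁ k) (j : Fin k) : tl n₁ k v (Sum.inl (Sum.inr j)) ≠ 0 ↔
    (v.1.1 : ℕ) = j ∧ 1 ≤ (v.1.2 : ℕ) ∧ n₁ ≤ j + v.1.2 := by
  classical
  obtain ⟨⟨a, b⟩, hv⟩ := v
  simp only [tl]
  have hj := j.2
  induction a using Fin.lastCases with
  | last =>
    induction b using Fin.cases with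
    | zero => exact absurd rfl hv
    | succ i => simp [hj.ne']
  | cast a =>
    induction b using Fin.cases with
    | zero => simp
    | succ i =>
      simp only [Fin.lastCases_castSucc, Fin.cases_succ]
      split_ifs with h
      · simp [Finsupp.single_apply, Fin.ext_iff]
        omega
      · simp [Finsupp.single_apply]
        omega

lemma tl_y (v : V n₁ k) (i : Fin n₁) : tl n₁ k v (Sum.inr (Sum.inl i)) ≠ 0 ↔
    (v.1.1 : ℕ) < k ∧ (v.1.2 : ℕ) = i + 1 ∧ (v.1.1 : ℕ) + v.1.2 < n₁ := by
  classical
  obtain ⟨⟨a, b⟩, hv⟩ := v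
  simp only [tl]
  induction a using Fin.lastCases with
  | last =>
    induction b using Fin.cases with
    | zero => exact absurd rfl hv
    | succ i => simp
  | cast a =>
    induction b using Fin.cases with
    | zero => simp
    | succ b =>
      simp only [Fin.lastCases_castSucc, Fin.cases_succ]
      have ha := a.2
      split_ifs with h
      · simp [Finsupp.single_apply]
        omega
      · simp [Finsupp.single_apply, Fin.ext_iff]
        omega

lemma EE_x (m : V n₁ k →₀ ℕ) (p : ℕ) : (∃ q ≤ p, EE n₁ k m p q) ↔
    ∃ hp : p < k, Finsupp.weight (tl n₁ k) m (Sum.inl (Sum.inr ⟨p, hp⟩)) ≠ 0 := by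
  simp only [weight_ne, tl_x]
  constructor
  · rintro ⟨q, hq, v, a1, a2, a3, a4, a5⟩
    exact ⟨a3, v, a1, a2, by omega, by omega⟩
  · rintro ⟨hp, v, a1, a2, a3, a4⟩
    have := v.1.2.2
    exact ⟨n₁ - v.1.2, by omega, v, a1, a2, hp, by omega, by omega⟩

lemma EE_y (m : V n₁ k →₀ ℕ) (q : ℕ) : (∃ p < q, EE n₁ k m p q) ↔
    ∃ hq : q < n₁, Finsupp.weight (tl n₁ k) m
      (Sum.inr (Sum.inl ⟨n₁ - 1 - q, by omega⟩)) ≠ 0 := by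
  simp only [weight_ne, tl_y]
  constructor
  · rintro ⟨p, hp, v, a1, a2, a3, a4, a5⟩
    exact ⟨a5, v, a1, by omega, by omega, by omega⟩
  · rintro ⟨hq, v, a1, a2, a3, a4⟩
    exact ⟨v.1.1, by omega, v, a1, rfl, a2, by omega, hq⟩

lemma le_one' {m : V n₁ k →₀ ℕ} (h : Finsupp.weight (wv n₁ k) m = ones n₁ k) (v : V n₁ k)
    (hv : m v ≠ 0) : m v = 1 := by
  by_cases hk : (v.1.1 : ℕ) < k
  · obtain ⟨u, -, h2, h3⟩ := row_fact n₁ k h v.1.1 hk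
    rw [h3 v rfl hv, h2]
  · have hi : 1 ≤ (v.1.2 : ℕ) := by
      by_contra hi
      apply v.2
      have := v.1.1.2
      refine Prod.ext (Fin.ext ?_) (Fin.ext ?_)
      · simp only [Fin.val_last]; omega
      · simp only [Fin.val_zero]; omega
    have := v.1.2.2
    obtain ⟨u, -, h2, h3⟩ := col_fact n₁ k h v.1.2 hi (by omega)
    rw [h3 v rfl hv, h2]

lemma V_ext {u v : V n₁ k} (h1 : (u.1.1 : ℕ) = v.1.1) (h2 : (u.1.2 : ℕ) = v.1.2) : u = v :=
  Subtype.ext (Prod.ext (Fin.ext h1) (Fin.ext h2))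

lemma supp_le {m m' : V n₁ k →₀ ℕ} (h : Finsupp.weight (wv n₁ k) m = ones n₁ k)
    (h' : Finsupp.weight (wv n₁ k) m' = ones n₁ k)
    (hE : ∀ p q, EE n₁ k m p q ↔ EE n₁ k m' p q) (v : V n₁ k) (hv : m v ≠ 0) : m' v ≠ 0 := by
  have b1 := v.1.1.2
  have b2 := v.1.2.2
  by_cases hk : (v.1.1 : ℕ) < k
  · by_cases hi : 1 ≤ (v.1.2 : ℕ)
    · obtain ⟨w, c1, c2, c3, c4, c5⟩ := (hE v.1.1 (n₁ - v.1.2)).mp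
        ⟨v, hv, rfl, hk, by omega, by omega⟩
      rwa [V_ext n₁ k (u := v) (v := w) (by omega) (by omega)]
    · obtain ⟨w, c1, c2, -⟩ := row_fact n₁ k h' v.1.1 hk
      have hw : (w.1.2 : ℕ) = 0 := by
        by_contra hw
        have := w.1.2.2
        obtain ⟨u, d1, d2, d3, d4, d5⟩ := (hE v.1.1 (n₁ - w.1.2)).mpr
          ⟨w, by omega, c1, hk, by omega, by omega⟩
        obtain ⟨x, -, -, hx⟩ := row_fact n₁ k h v.1.1 hk
        have : v = u := (hx v rfl hv).trans (hx u d2 d1).symm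
        subst this
        omega
      rw [V_ext n₁ k (u := v) (v := w) (by omega) (by omega)]
      omega
  · have hi : 1 ≤ (v.1.2 : ℕ) := by
      by_contra hi
      apply v.2
      refine Prod.ext (Fin.ext ?_) (Fin.ext ?_)
      · simp only [Fin.val_last]; omega
      · simp only [Fin.val_zero]; omega
    obtain ⟨w, c1, c2, -⟩ := col_fact n₁ k h' v.1.2 hi (by omega)
    have b3 := w.1.1.2
    have hw : ¬ (w.1.1 : ℕ) < k := by
      intro hw
      obtain ⟨u, d1, d2, d3, d4, d5⟩ := (hE w.1.1 (n₁ - v.1.2)).mpr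
        ⟨w, by omega, rfl, hw, by omega, by omega⟩
      obtain ⟨x, -, -, hx⟩ := col_fact n₁ k h v.1.2 hi (by omega)
      have : v = u := (hx v rfl hv).trans (hx u (by omega) d1).symm
      subst this
      omega
    rw [V_ext n₁ k (u := v) (v := w) (by omega) (by omega)]
    omega

lemma inj_std : Set.InjOn (Finsupp.weight (tl n₁ k))
    {e | Finsupp.weight (wv n₁ k) e = ones n₁ k ∧ StdM n₁ k e} := by
  rintro m ⟨h, hs⟩ m' ⟨h', hs'⟩ heq
  have e1 : ∀ p, (∃ q ≤ p, EE n₁ k m p q) ↔ (∃ q ≤ p, EE n₁ k m' p q) := by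
    intro p; rw [EE_x, EE_x, heq]
  have e2 : ∀ q, (∃ p < q, EE n₁ k m p q) ↔ (∃ p < q, EE n₁ k m' p q) := by
    intro q; rw [EE_y, EE_y, heq]
  have hE : ∀ p q, EE n₁ k m p q ↔ EE n₁ k m' p q := fun p q =>
    ⟨comb_le _ _ (EE_row n₁ k h) (EE_col n₁ k h) (EE_std n₁ k h hs)
      (EE_row n₁ k h') (EE_col n₁ k h') (EE_std n₁ k h' hs') e1 e2 p q,
     comb_le _ _ (EE_row n₁ k h') (EE_col n₁ k h') (EE_std n₁ k h' hs')
      (EE_row n₁ k h) (EE_col n₁ k h) (EE_std n₁ k h hs)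
      (fun p => (e1 p).symm) (fun p => (e2 p).symm) p q⟩
  ext v
  by_cases hv : m v = 0
  · by_cases hv' : m' v = 0
    · rw [hv, hv']
    · exact absurd hv (supp_le n₁ k h' h (fun p q => (hE p q).symm) v hv')
  · rw [le_one' n₁ k h v hv, le_one' n₁ k h' v (supp_le n₁ k h h' hE v hv)]

lemma multilin (g : Source F n₁ k) (hg : φ F n₁ k g = 0)
    (hw : ∀ m ∈ g.support, Finsupp.weight (wv n₁ k) m = ones n₁ k) : g ∈ I3 F n₁ k := by
  have h1 : g ∈ NN F n₁ k (ones n₁ k) := by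
    rw [g.as_sum]
    refine Submodule.sum_mem _ fun m hm => ?_
    have : monomial m (coeff m g) = coeff m g • (monomial m 1 : Source F n₁ k) := by
      rw [smul_monomial, smul_eq_mul, mul_one]
    rw [this]
    exact Submodule.smul_mem _ _ (spanning F n₁ k _ _ m rfl (hw m hm))
  obtain ⟨s, hs, t, ht, rfl⟩ := Submodule.mem_sup.mp h1
  have ht' : t ∈ I3 F n₁ k := ht
  have hφ : φ F n₁ k s = 0 := by
    rw [map_add, I3_le F n₁ k t ht', add_zero] at hg
    exact hg
  have hs0 : s = 0 := by
    refine indep F n₁ k _ (inj_std n₁ k) s ?_ hφ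
    classical
    clear hφ h1 hg hw
    induction hs using Submodule.span_induction with
    | mem x hx =>
      obtain ⟨e, he, rfl⟩ := hx
      intro m hm
      have := support_monomial_subset hm
      rw [Finset.mem_singleton] at this
      rw [this]; exact he
    | zero => simp
    | add x y _ _ hx hy =>
      intro m hm
      rcases Finset.mem_union.mp (support_add hm) with h | h
      · exact hx m h
      · exact hy m h
    | smul a x _ hx =>
      intro m hm
      exact hx m (support_smul hm)
  rw [hs0, zero_add]
  exact ht'

/-- `ker φ` equals the ideal generated by all `3×3` minors of `(z_{j,i})`. -/
theorem kernel_phi_eq_three_minors :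
    RingHom.ker (φ F n₁ k).toRingHom =
      Ideal.span { p : Source F n₁ k |
        ∃ (jv : Fin 3 → Fin (k + 1)) (iv : Fin 3 → Fin (n₁ + 1)),
          p = Matrix.det (Matrix.of fun a b => Z F n₁ k (jv a) (iv b)) } := by
  apply le_antisymm
  · intro f hf
    exact reduction F n₁ k (fun N D g hg hw => multilin F N D g hg hw) f hf
  · intro f hf
    exact I3_le F n₁ k f hf

end Stmt1
end

section
/- Let F be a field of characteristic 0, n₁ < n ≤ n, and consider monomials z_{j,i} with i ∈ {1,...,n₁} ∪ {0}, j ∈ {n₁+1,...,n} ∪ {n+1}. Suppose a polynomial f = Σ_s a_s f_s where each f_s is a degree-k monomial with a fixed multiset I₁ of lower indices and fixed multiset I₃ of upper indices, and the images under the map z_{j,i} ↦ x_i x_j − y_i y_j (with z_{n+1,i} ↦ x_i, z_{j,0} ↦ y_j) sum to zero. Then f lies in the ideal generated by the 3×3 minors of the matrix (z_{j,i}). -/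
open MvPolynomial

namespace Stmt14

variable (F : Type*) [Field F] [CharZero F] (n₁ n : ℕ)

/-- Target algebra `F[x_i, y_j]`: `x i = X (Sum.inl i)`, `y j = X (Sum.inr j)`. -/
noncomputable def xv (i : ℕ) : MvPolynomial (ℕ ⊕ ℕ) F := X (Sum.inl i)
noncomputable def yv (j : ℕ) : MvPolynomial (ℕ ⊕ ℕ) F := X (Sum.inr j)

/-- The "variable" `z_{j,i}` in `C = F[z_{j,i}]`, with the convention
`z_{n+1,0} = 0`. -/
noncomputable def Z (j i : ℕ) : MvPolynomial (ℕ × ℕ) F :=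
  if j = n + 1 ∧ i = 0 then 0 else X (j, i)

/-- The map `φ`: `z_{j,i} ↦ x_i x_j − y_i y_j` for `1 ≤ i`, `j ≤ n`;
`z_{n+1,i} ↦ x_i`; `z_{j,0} ↦ y_j`. -/
noncomputable def φ : MvPolynomial (ℕ × ℕ) F →ₐ[F] MvPolynomial (ℕ ⊕ ℕ) F :=
  aeval (fun p : ℕ × ℕ =>
    if p.2 = 0 then (if p.1 = n + 1 then 0 else yv F p.1)
    else if p.1 = n + 1 then xv F p.2
    else xv F p.2 * xv F p.1 - yv F p.2 * yv F p.1)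

/-- The determinantal ideal generated by the `3×3` minors of `(z_{j,i})`, with
indices `i ∈ {0,1,...,n₁}`, `j ∈ {n₁+1,...,n,n+1}`. -/
noncomputable def R₃ : Ideal (MvPolynomial (ℕ × ℕ) F) :=
  Ideal.span { p | ∃ (jv iv : Fin 3 → ℕ),
    (∀ c, iv c ≤ n₁ ∧ n₁ + 1 ≤ jv c ∧ jv c ≤ n + 1) ∧
    p = Matrix.det (Matrix.of fun a b => Z F n (jv a) (iv b)) }

/-- The potential `Σ j·i` of a multiset of index pairs. -/
def En (M : Multiset (ℕ × ℕ)) : ℕ := (M.map fun p => p.1 * p.2).sum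

/-- No strictly increasing pair. -/
def Anti (M : Multiset (ℕ × ℕ)) : Prop := ∀ p ∈ M, ∀ q ∈ M, ¬ (p.1 < q.1 ∧ p.2 < q.2)

lemma En_cons (p : ℕ × ℕ) (M : Multiset (ℕ × ℕ)) : En (p ::ₘ M) = p.1 * p.2 + En M := by
  simp [En]

lemma En_add (M N : Multiset (ℕ × ℕ)) : En (M + N) = En M + En N := by
  simp [En]

/-- A non-empty multiset without strict increasing pairs contains its south-east corner. -/
lemma exists_corner (M : Multiset (ℕ × ℕ)) (hM : Anti M) (h0 : M ≠ 0) :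
    ∃ p ∈ M, ∀ q ∈ M, q.1 ≤ p.1 ∧ p.2 ≤ q.2 := by
  obtain ⟨q0, hq0⟩ := Multiset.exists_mem_of_ne_zero h0
  obtain ⟨p, hp, hmax⟩ := Finset.exists_max_image M.toFinset (fun p => p.1)
    ⟨q0, by simpa using hq0⟩
  obtain ⟨r, hr, hmin⟩ := Finset.exists_min_image (M.toFinset.filter (fun q => q.1 = p.1))
    (fun p => p.2) ⟨p, by simpa using hp⟩
  simp only [Finset.mem_filter, Multiset.mem_toFinset] at hr hmin hmax
  refine ⟨r, hr.1, fun q hq => ⟨hr.2 ▸ hmax q hq, ?_⟩⟩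
  rcases lt_or_eq_of_le (hmax q hq) with h | h
  · have := hM q hq r hr.1
    rw [hr.2] at this
    by_contra hc
    exact this ⟨h, by omega⟩
  · exact hmin q ⟨hq, h⟩

/-- Rearrangement inequality with equality case. -/
lemma rearr : ∀ (k : ℕ) (M N : Multiset (ℕ × ℕ)), M.card = k → Anti M →
    N.map Prod.fst = M.map Prod.fst → N.map Prod.snd = M.map Prod.snd →
    En M ≤ En N ∧ (En N ≤ En M → N = M) := by
  intro k
  induction k with
  | zero =>
    intro M N hk _ h1 _
    rw [Multiset.card_eq_zero] at hk
    subst hk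
    have : N = 0 := by simpa using h1
    subst this
    simp
  | succ k ih =>
    intro M N hk hM h1 h2
    have h0 : M ≠ 0 := by
      rintro rfl
      simp at hk
    obtain ⟨p, hp, hc⟩ := exists_corner M hM h0
    obtain ⟨M0, rfl⟩ := Multiset.exists_cons_of_mem hp
    have hk0 : M0.card = k := by simpa using hk
    have hM0 : Anti M0 := fun a ha b hb =>
      hM a (Multiset.mem_cons_of_mem ha) b (Multiset.mem_cons_of_mem hb)
    by_cases hpN : p ∈ N
    · obtain ⟨N0, rfl⟩ := Multiset.exists_cons_of_mem hpN
      simp only [Multiset.map_cons, Multiset.cons_inj_right] at h1 h2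
      obtain ⟨i1, i2⟩ := ih M0 N0 hk0 hM0 h1 h2
      rw [En_cons, En_cons]
      refine ⟨by omega, fun h => ?_⟩
      rw [i2 (by omega)]
    · have ha : p.1 ∈ N.map Prod.fst := by rw [h1]; simp
      obtain ⟨u, hu, hu1⟩ := Multiset.mem_map.1 ha
      have hb : p.2 ∈ N.map Prod.snd := by rw [h2]; simp
      obtain ⟨v, hv, hv1⟩ := Multiset.mem_map.1 hb
      have huv : v ≠ u := by
        rintro rfl
        exact hpN (by rwa [← (Prod.ext hu1 hv1 : v = p)])
      have hvr : v.1 ≤ p.1 := by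
        have : v.1 ∈ N.map Prod.fst := Multiset.mem_map_of_mem _ hv
        rw [h1] at this
        obtain ⟨w, hw, hw1⟩ := Multiset.mem_map.1 this
        rw [← hw1]
        exact (hc w hw).1
      have hur : p.2 ≤ u.2 := by
        have : u.2 ∈ N.map Prod.snd := Multiset.mem_map_of_mem _ hu
        rw [h2] at this
        obtain ⟨w, hw, hw1⟩ := Multiset.mem_map.1 this
        rw [← hw1]
        exact (hc w hw).2
      have hv2 : v.1 ≠ p.1 := fun h => hpN (by rwa [← (Prod.ext h hv1 : v = p)])
      have hu2 : u.2 ≠ p.2 := fun h => hpN (by rwa [← (Prod.ext hu1 h : u = p)])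
      obtain ⟨N1, rfl⟩ := Multiset.exists_cons_of_mem hu
      have hv' : v ∈ N1 := by
        rcases Multiset.mem_cons.1 hv with h | h
        · exact absurd h huv
        · exact h
      obtain ⟨N0, rfl⟩ := Multiset.exists_cons_of_mem hv'
      have g1 : ((v.1, u.2) ::ₘ N0).map Prod.fst = M0.map Prod.fst := by
        simp only [Multiset.map_cons, hu1, Multiset.cons_inj_right] at h1 ⊢
        exact h1
      have g2 : ((v.1, u.2) ::ₘ N0).map Prod.snd = M0.map Prod.snd := by
        simp only [Multiset.map_cons, hv1] at h2 ⊢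
        rw [Multiset.cons_swap, Multiset.cons_inj_right] at h2
        exact h2
      obtain ⟨i1, -⟩ := ih M0 _ hk0 hM0 g1 g2
      have key : En (p ::ₘ M0) < En (u ::ₘ v ::ₘ N0) := by
        simp only [En_cons] at i1 ⊢
        rw [hu1, hv1]
        have e1 : v.1 < p.1 := lt_of_le_of_ne hvr hv2
        have e2 : p.2 < u.2 := lt_of_le_of_ne hur (Ne.symm hu2)
        nlinarith [mul_pos (Nat.sub_pos_of_lt e1) (Nat.sub_pos_of_lt e2),
          mul_lt_mul_of_pos_left e2 (Nat.sub_pos_of_lt e1), Nat.sub_add_cancel e1.le]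
      exact ⟨key.le, fun h => absurd key (by omega)⟩

/-- The monomial attached to a multiset of index pairs. -/
noncomputable def mon (M : Multiset (ℕ × ℕ)) : MvPolynomial (ℕ × ℕ) F :=
  (M.map fun p => Z F n p.1 p.2).prod

lemma mon_cons (p : ℕ × ℕ) (M : Multiset (ℕ × ℕ)) :
    mon F n (p ::ₘ M) = Z F n p.1 p.2 * mon F n M := by
  simp [mon]

/-- Admissible multisets with given contents. -/
def Adm (I₁ I₃ : Multiset ℕ) (M : Multiset (ℕ × ℕ)) : Prop :=
  M.map Prod.snd = I₁ ∧ M.map Prod.fst = I₃ ∧ ∀ p ∈ M, p.2 ≤ n₁ ∧ n₁ + 1 ≤ p.1 ∧ p.1 ≤ n + 1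

/-- Standard multisets. -/
def Std (M : Multiset (ℕ × ℕ)) : Prop :=
  (n + 1, 0) ∉ M ∧ ∀ p ∈ M, ∀ q ∈ M, ∀ r ∈ M,
    ¬ ((p.1 < q.1 ∧ p.2 < q.2) ∧ (q.1 < r.1 ∧ q.2 < r.2))

lemma adm_perm {I₁ I₃ : Multiset ℕ} {a b c : ℕ × ℕ} {M : Multiset (ℕ × ℕ)}
    (h : Adm n₁ n I₁ I₃ (a ::ₘ b ::ₘ c ::ₘ M)) (x y z : ℕ)
    (hx : ({x, y, z} : Multiset ℕ) = {a.2, b.2, c.2}) :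
    Adm n₁ n I₁ I₃ ((a.1, x) ::ₘ (b.1, y) ::ₘ (c.1, z) ::ₘ M) := by
  obtain ⟨h1, h2, h3⟩ := h
  have hh : ∀ w ∈ ({x, y, z} : Multiset ℕ), w ≤ n₁ := by
    rw [hx]
    intro w hw
    simp only [Multiset.insert_eq_cons, Multiset.mem_cons, Multiset.mem_singleton] at hw
    rcases hw with rfl | rfl | rfl
    · exact (h3 a (by simp)).1
    · exact (h3 b (by simp)).1
    · exact (h3 c (by simp)).1
  refine ⟨?_, ?_, ?_⟩
  · rw [← h1]
    have := congrArg (· + M.map Prod.snd) hx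
    simpa [Multiset.insert_eq_cons] using this
  · rw [← h2]; simp
  · intro p hp
    simp only [Multiset.mem_cons] at hp
    rcases hp with rfl | rfl | rfl | hp
    · exact ⟨hh _ (by simp), (h3 a (by simp)).2⟩
    · exact ⟨hh _ (by simp), (h3 b (by simp)).2⟩
    · exact ⟨hh _ (by simp), (h3 c (by simp)).2⟩
    · exact h3 p (by simp [hp])

/-- Straightening: every admissible monomial is a combination of standard ones mod `R₃`. -/
lemma straighten (I₁ I₃ : Multiset ℕ) : ∀ (e : ℕ) (M : Multiset (ℕ × ℕ)), En M = e →
    Adm n₁ n I₁ I₃ M →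
    mon F n M ∈ (R₃ F n₁ n).restrictScalars F ⊔
      Submodule.span F (mon F n '' {N | Adm n₁ n I₁ I₃ N ∧ Std n N}) := by
  intro e
  induction e using Nat.strong_induction_on with
  | _ e ih =>
  intro M hE hM
  by_cases hS : Std n M
  · exact Submodule.mem_sup_right (Submodule.subset_span ⟨M, ⟨hM, hS⟩, rfl⟩)
  by_cases h0 : (n + 1, 0) ∈ M
  · obtain ⟨M0, rfl⟩ := Multiset.exists_cons_of_mem h0
    rw [mon_cons]
    simp [Z]
  simp only [Std, h0, not_false_eq_true, true_and, not_forall, not_not] at hS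
  obtain ⟨p, hp, q, hq, r, hr, ⟨hpq1, hpq2⟩, hqr1, hqr2⟩ := hS
  obtain ⟨M1, rfl⟩ := Multiset.exists_cons_of_mem hp
  have hq' : q ∈ M1 := by
    rcases Multiset.mem_cons.1 hq with h | h
    · subst h; omega
    · exact h
  obtain ⟨M2, rfl⟩ := Multiset.exists_cons_of_mem hq'
  have hr' : r ∈ M2 := by
    simp only [Multiset.mem_cons] at hr
    rcases hr with h | h | h
    · subst h; omega
    · subst h; omega
    · exact h
  obtain ⟨M0, rfl⟩ := Multiset.exists_cons_of_mem hr'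
  obtain ⟨p1, p2⟩ := p
  obtain ⟨q1, q2⟩ := q
  obtain ⟨r1, r2⟩ := r
  simp only at hpq1 hpq2 hqr1 hqr2
  have step : ∀ x y z : ℕ, ({x, y, z} : Multiset ℕ) = {p2, q2, r2} →
      p1 * x + q1 * y + r1 * z < p1 * p2 + q1 * q2 + r1 * r2 →
      mon F n ((p1, x) ::ₘ (q1, y) ::ₘ (r1, z) ::ₘ M0) ∈ (R₃ F n₁ n).restrictScalars F ⊔
      Submodule.span F (mon F n '' {N | Adm n₁ n I₁ I₃ N ∧ Std n N}) := by
    intro x y z hx hlt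
    refine ih _ ?_ _ rfl (adm_perm n₁ n hM x y z hx)
    rw [← hE]
    simp only [En_cons]
    omega
  obtain ⟨a, rfl⟩ := Nat.exists_eq_add_of_lt hpq1
  obtain ⟨b, rfl⟩ := Nat.exists_eq_add_of_lt hqr1
  obtain ⟨c, rfl⟩ := Nat.exists_eq_add_of_lt hpq2
  obtain ⟨d, rfl⟩ := Nat.exists_eq_add_of_lt hqr2
  set j2 := p1 + a + 1 with hj2
  set j3 := j2 + b + 1 with hj3
  set i2 := p2 + c + 1 with hi2
  set i3 := i2 + d + 1 with hi3
  have s1 := step p2 i3 i2 (by simp only [Multiset.insert_eq_cons]; rw [← Multiset.cons_zero, ← Multiset.cons_zero, Multiset.cons_swap i3])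
    (by simp only [hj3, hj2, hi3, hi2]; nlinarith [Nat.zero_le (a*c), Nat.zero_le (a*d), Nat.zero_le (b*c), Nat.zero_le (b*d)])
  have s2 := step i2 p2 i3 (by simp only [Multiset.insert_eq_cons]; rw [← Multiset.cons_zero, Multiset.cons_swap i2])
    (by simp only [hj3, hj2, hi3, hi2]; nlinarith [Nat.zero_le (a*c), Nat.zero_le (a*d), Nat.zero_le (b*c), Nat.zero_le (b*d)])
  have s3 := step i2 i3 p2 (by simp only [Multiset.insert_eq_cons]; rw [← Multiset.cons_zero, ← Multiset.cons_zero, Multiset.cons_swap i3, Multiset.cons_swap i2])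
    (by simp only [hj3, hj2, hi3, hi2]; nlinarith [Nat.zero_le (a*c), Nat.zero_le (a*d), Nat.zero_le (b*c), Nat.zero_le (b*d)])
  have s4 := step i3 p2 i2 (by simp only [Multiset.insert_eq_cons]; rw [← Multiset.cons_zero, ← Multiset.cons_zero, Multiset.cons_swap i3, Multiset.cons_swap i3])
    (by simp only [hj3, hj2, hi3, hi2]; nlinarith [Nat.zero_le (a*c), Nat.zero_le (a*d), Nat.zero_le (b*c), Nat.zero_le (b*d)])
  have s5 := step i3 i2 p2 (by simp only [Multiset.insert_eq_cons]; rw [← Multiset.cons_zero, ← Multiset.cons_zero, Multiset.cons_swap i2, Multiset.cons_swap i3, Multiset.cons_swap i3])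
    (by simp only [hj3, hj2, hi3, hi2]; nlinarith [Nat.zero_le (a*c), Nat.zero_le (a*d), Nat.zero_le (b*c), Nat.zero_le (b*d)])
  have hdet : Matrix.det (Matrix.of fun a b => Z F n (![p1, j2, j3] a) (![p2, i2, i3] b))
      ∈ R₃ F n₁ n := by
    apply Ideal.subset_span
    refine ⟨![p1, j2, j3], ![p2, i2, i3], ?_, rfl⟩
    have g1 := hM.2.2 (p1, p2) (by simp)
    have g2 := hM.2.2 (j2, i2) (by simp)
    have g3 := hM.2.2 (j3, i3) (by simp)
    simp only at g1 g2 g3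
    intro c
    fin_cases c
    · exact g1
    · exact g2
    · exact g3
  have hd2 := Submodule.mem_sup_left (S := (R₃ F n₁ n).restrictScalars F)
    (T := Submodule.span F (mon F n '' {N | Adm n₁ n I₁ I₃ N ∧ Std n N}))
    (Ideal.mul_mem_right (mon F n M0) _ hdet)
  have := Submodule.add_mem _ (Submodule.sub_mem _ (Submodule.sub_mem _ (Submodule.add_mem _
    (Submodule.add_mem _ hd2 s1) s2) s3) s4) s5
  convert this using 1
  simp only [mon_cons, Matrix.det_fin_three, Matrix.of_apply, Matrix.cons_val_zero,
    Matrix.cons_val_one, Matrix.cons_val]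
  ring

lemma phi_Z (j i : ℕ) : φ F n (Z F n j i) =
    (if i = 0 then 0 else xv F i) * (if j = n + 1 then 1 else xv F j)
    - (if i = 0 then -1 else yv F i) * (if j = n + 1 then 0 else yv F j) := by
  unfold Z φ
  split_ifs <;> simp_all

lemma phi_R₃ (f : MvPolynomial (ℕ × ℕ) F) (hf : f ∈ R₃ F n₁ n) : φ F n f = 0 := by
  have : R₃ F n₁ n ≤ RingHom.ker (φ F n) := by
    unfold R₃
    rw [Ideal.span_le]
    rintro _ ⟨jv, iv, -, rfl⟩
    simp only [SetLike.mem_coe, RingHom.mem_ker, Matrix.det_fin_three, Matrix.of_apply,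
      map_add, map_sub, map_mul, phi_Z]
    ring
  exact this hf

/-- Specialization `y_i ↦ -1` for `i ≤ n₁`, `y_j ↦ 1` for `j > n₁`. -/
noncomputable def spec : MvPolynomial (ℕ ⊕ ℕ) F →ₐ[F] MvPolynomial ℕ F :=
  aeval (Sum.elim (fun i => X i) (fun j => if j ≤ n₁ then -1 else 1))

noncomputable def Av (p : ℕ × ℕ) : MvPolynomial ℕ F :=
  if p.2 = 0 then 0 else X p.2 * (if p.1 = n + 1 then 1 else X p.1)

noncomputable def Bv (p : ℕ × ℕ) : MvPolynomial ℕ F :=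
  if p.1 = n + 1 then 0 else 1

lemma spec_Z (j i : ℕ) (hi : i ≤ n₁) (hj : n₁ < j) :
    spec F n₁ (φ F n (Z F n j i)) = Av F n (j, i) + Bv F n (j, i) := by
  rw [phi_Z]
  unfold spec Av Bv xv yv
  have : ¬ j ≤ n₁ := by omega
  split_ifs <;> simp [this, hi]

/-- Exponent multiset of the `x`-part. -/
def ex (M : Multiset (ℕ × ℕ)) : Multiset ℕ :=
  M.map Prod.snd + (M.map Prod.fst).filter (· ≠ n + 1)

lemma prod_Av (M : Multiset (ℕ × ℕ)) :
    (M.map (Av F n)).prod = if (∀ p ∈ M, p.2 ≠ 0) then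
      monomial (Multiset.toFinsupp (ex n M)) 1 else 0 := by
  induction M using Multiset.induction_on with
  | empty => simp [ex]
  | cons p M ih =>
    rw [Multiset.map_cons, Multiset.prod_cons, ih]
    by_cases h : p.2 = 0
    · simp [h, Av]
    · by_cases hM : ∀ p ∈ M, p.2 ≠ 0
      · have h2 : ∀ q ∈ p ::ₘ M, q.2 ≠ 0 := by
          intro q hq
          rcases Multiset.mem_cons.1 hq with rfl | hq
          · exact h
          · exact hM q hq
        rw [if_pos hM, if_pos h2]
        by_cases h3 : p.1 = n + 1
        · have : ex n (p ::ₘ M) = {p.2} + ex n M := by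
            simp [ex, h3]
          rw [this, map_add, Multiset.toFinsupp_singleton]
          simp [Av, h, h3, X, monomial_mul]
        · have : ex n (p ::ₘ M) = {p.2} + ({p.1} + ex n M) := by
            simp [ex, h3]
          rw [this, map_add, map_add, Multiset.toFinsupp_singleton, Multiset.toFinsupp_singleton]
          simp [Av, h, h3, X, monomial_mul, add_assoc]
      · rw [if_neg hM, if_neg, mul_zero]
        exact fun h2 => hM fun q hq => h2 q (Multiset.mem_cons_of_mem hq)

lemma prod_Bv (M : Multiset (ℕ × ℕ)) :
    (M.map (Bv F n)).prod = if (∀ p ∈ M, p.1 ≠ n + 1) then 1 else 0 := by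
  induction M using Multiset.induction_on with
  | empty => simp
  | cons p M ih =>
    rw [Multiset.map_cons, Multiset.prod_cons, ih]
    by_cases h : p.1 = n + 1
    · simp [h, Bv]
    · have hiff : (∀ q ∈ p ::ₘ M, q.1 ≠ n + 1) ↔ (∀ q ∈ M, q.1 ≠ n + 1) := by
        rw [Multiset.forall_mem_cons]
        exact and_iff_right h
      rw [Bv, if_neg h, one_mul]
      by_cases hM : ∀ q ∈ M, q.1 ≠ n + 1
      · rw [if_pos hM, if_pos (hiff.2 hM)]
      · rw [if_neg hM, if_neg (fun hc => hM (hiff.1 hc))]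

/-- The condition for a splitting to contribute to the coefficient at `d`. -/
def Good (d : Multiset ℕ) (p : Multiset (ℕ × ℕ) × Multiset (ℕ × ℕ)) : Prop :=
  (∀ q ∈ p.1, q.2 ≠ 0) ∧ (∀ q ∈ p.2, q.1 ≠ n + 1) ∧ ex n p.1 = d

open Classical in
lemma coeff_mon (N : Multiset (ℕ × ℕ)) (hN : ∀ p ∈ N, p.2 ≤ n₁ ∧ n₁ + 1 ≤ p.1 ∧ p.1 ≤ n + 1)
    (d : Multiset ℕ) :
    coeff (Multiset.toFinsupp d) (spec F n₁ (φ F n (mon F n N))) =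
    (((N.antidiagonal.map (fun p => if Good n d p then 1 else 0)).sum : ℕ) : F) := by
  have h1 : spec F n₁ (φ F n (mon F n N)) = (N.map fun p => Av F n p + Bv F n p).prod := by
    rw [mon, map_multiset_prod, map_multiset_prod, Multiset.map_map, Multiset.map_map]
    congr 1
    apply Multiset.map_congr rfl
    intro p hp
    exact spec_Z F n₁ n p.1 p.2 (hN p hp).1 (hN p hp).2.1
  rw [h1, Multiset.prod_map_add, Nat.cast_multiset_sum, Multiset.map_map]
  change (lcoeff F _) _ = _
  rw [map_multiset_sum, Multiset.map_map]
  congr 1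
  apply Multiset.map_congr rfl
  intro p _
  simp only [Function.comp_apply, lcoeff_apply, prod_Av, prod_Bv]
  by_cases a1 : ∀ q ∈ p.1, q.2 ≠ 0
  · by_cases a2 : ∀ q ∈ p.2, q.1 ≠ n + 1
    · rw [if_pos a1, if_pos a2, mul_one, coeff_monomial]
      by_cases a3 : ex n p.1 = d
      · rw [if_pos (by rw [a3]), if_pos (show Good n d p from ⟨a1, a2, a3⟩)]; simp
      · rw [if_neg (fun h => a3 (Multiset.toFinsupp.injective h)), if_neg (fun h : Good n d p => a3 h.2.2)]
        simp
    · rw [if_neg a2, if_neg (fun h : Good n d p => a2 h.2.1)]; simp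
  · rw [if_neg a1, if_neg (fun h : Good n d p => a1 h.1)]; simp

lemma coeff_ne_zero_iff (N : Multiset (ℕ × ℕ))
    (hN : ∀ p ∈ N, p.2 ≤ n₁ ∧ n₁ + 1 ≤ p.1 ∧ p.1 ≤ n + 1) (d : Multiset ℕ) :
    coeff (Multiset.toFinsupp d) (spec F n₁ (φ F n (mon F n N))) ≠ 0 ↔
      ∃ A B, A + B = N ∧ Good n d (A, B) := by
  classical
  rw [coeff_mon F n₁ n N hN, Nat.cast_ne_zero, Ne, Multiset.sum_eq_zero_iff]
  constructor
  · intro h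
    push Not at h
    obtain ⟨x, hx, hx0⟩ := h
    obtain ⟨p, hp, rfl⟩ := Multiset.mem_map.1 hx
    refine ⟨p.1, p.2, Multiset.mem_antidiagonal.1 hp, ?_⟩
    by_contra hc
    exact hx0 (if_neg hc)
  · rintro ⟨A, B, h, hG⟩ hall
    have := hall _ (Multiset.mem_map_of_mem _ ((Multiset.mem_antidiagonal (x := (A, B))).2 h))
    rw [if_pos hG] at this
    exact one_ne_zero this

/-- A standard multiset splits into two parts without increasing pairs. -/
lemma std_split (M : Multiset (ℕ × ℕ)) (hM : Std n M)
    (hr : ∀ p ∈ M, p.2 ≤ n₁ ∧ n₁ + 1 ≤ p.1 ∧ p.1 ≤ n + 1) :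
    ∃ A B, A + B = M ∧ Anti A ∧ Anti B ∧ (∀ q ∈ A, q.2 ≠ 0) ∧ (∀ q ∈ B, q.1 ≠ n + 1) := by
  classical
  refine ⟨M.filter (fun p => p.1 = n + 1 ∨ ∃ q ∈ M, q.1 < p.1 ∧ q.2 < p.2),
    M.filter (fun p => ¬ (p.1 = n + 1 ∨ ∃ q ∈ M, q.1 < p.1 ∧ q.2 < p.2)),
    Multiset.filter_add_not _ _, ?_, ?_, ?_, ?_⟩
  · intro p hp q hq hlt
    rw [Multiset.mem_filter] at hp hq
    have := (hr q hq.1).2.2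
    rcases hp.2 with h | ⟨r, hrM, hrp⟩
    · omega
    · exact hM.2 r hrM p hp.1 q hq.1 ⟨hrp, hlt⟩
  · intro p hp q hq hlt
    rw [Multiset.mem_filter] at hp hq
    exact hq.2 (Or.inr ⟨p, hp.1, hlt⟩)
  · intro q hq h0
    rw [Multiset.mem_filter] at hq
    rcases hq.2 with h | ⟨r, hrM, hrp⟩
    · exact hM.1 (by rw [← h, ← h0]; exact hq.1)
    · omega
  · intro q hq h0
    rw [Multiset.mem_filter] at hq
    exact hq.2 (Or.inl h0)

lemma ex_snd (A : Multiset (ℕ × ℕ)) (hr : ∀ p ∈ A, p.2 ≤ n₁ ∧ n₁ + 1 ≤ p.1 ∧ p.1 ≤ n + 1) :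
    (ex n A).filter (· ≤ n₁) = A.map Prod.snd := by
  unfold ex
  rw [Multiset.filter_add, Multiset.filter_eq_self.2, Multiset.filter_eq_nil.2, add_zero]
  · intro a ha
    obtain ⟨p, hp, rfl⟩ := Multiset.mem_map.1 (Multiset.mem_filter.1 ha).1
    have := hr p hp
    omega
  · intro a ha
    obtain ⟨p, hp, rfl⟩ := Multiset.mem_map.1 ha
    exact (hr p hp).1

/-- Contents are determined by the exponent. -/
lemma contents (I₁ I₃ : Multiset ℕ) (A B A' B' : Multiset (ℕ × ℕ))
    (h : Adm n₁ n I₁ I₃ (A + B)) (h' : Adm n₁ n I₁ I₃ (A' + B'))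
    (hB : ∀ q ∈ B, q.1 ≠ n + 1) (hB' : ∀ q ∈ B', q.1 ≠ n + 1) (he : ex n A = ex n A') :
    (A.map Prod.fst = A'.map Prod.fst ∧ A.map Prod.snd = A'.map Prod.snd) ∧
    (B.map Prod.fst = B'.map Prod.fst ∧ B.map Prod.snd = B'.map Prod.snd) := by
  have hrA : ∀ p ∈ A, p.2 ≤ n₁ ∧ n₁ + 1 ≤ p.1 ∧ p.1 ≤ n + 1 :=
    fun p hp => h.2.2 p (Multiset.mem_add.2 (Or.inl hp))
  have hrA' : ∀ p ∈ A', p.2 ≤ n₁ ∧ n₁ + 1 ≤ p.1 ∧ p.1 ≤ n + 1 :=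
    fun p hp => h'.2.2 p (Multiset.mem_add.2 (Or.inl hp))
  have hs : A.map Prod.snd = A'.map Prod.snd := by
    rw [← ex_snd n₁ n A hrA, ← ex_snd n₁ n A' hrA', he]
  have hf1 : (A.map Prod.fst).filter (· ≠ n + 1) = (A'.map Prod.fst).filter (· ≠ n + 1) := by
    unfold ex at he
    rw [hs] at he
    exact add_left_cancel he
  have hz : ∀ B : Multiset (ℕ × ℕ), (∀ q ∈ B, q.1 ≠ n + 1) →
      (B.map Prod.fst).filter (fun a => ¬ a ≠ n + 1) = 0 := by
    intro B hB
    rw [Multiset.filter_eq_nil]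
    intro a ha
    obtain ⟨p, hp, rfl⟩ := Multiset.mem_map.1 ha
    exact fun hc => hc (hB p hp)
  have h13 : A.map Prod.fst + B.map Prod.fst = A'.map Prod.fst + B'.map Prod.fst := by
    rw [← Multiset.map_add, ← Multiset.map_add, h.2.1, h'.2.1]
  have h11 : A.map Prod.snd + B.map Prod.snd = A'.map Prod.snd + B'.map Prod.snd := by
    rw [← Multiset.map_add, ← Multiset.map_add, h.1, h'.1]
  have hf2 : (A.map Prod.fst).filter (fun a => ¬ a ≠ n + 1)
      = (A'.map Prod.fst).filter (fun a => ¬ a ≠ n + 1) := by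
    have := congrArg (Multiset.filter (fun a => ¬ a ≠ n + 1)) h13
    rwa [Multiset.filter_add, Multiset.filter_add, hz B hB, hz B' hB', add_zero, add_zero] at this
  have hf : A.map Prod.fst = A'.map Prod.fst := by
    rw [← Multiset.filter_add_not (· ≠ n + 1) (A.map Prod.fst), hf1, hf2,
      Multiset.filter_add_not]
  refine ⟨⟨hf, hs⟩, ?_, ?_⟩
  · rw [hf] at h13
    exact add_left_cancel h13
  · rw [hs] at h11
    exact add_left_cancel h11

/-- Standard monomials have linearly independent images. -/
lemma std_indep (I₁ I₃ : Multiset ℕ) (l : Multiset (ℕ × ℕ) →₀ F)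
    (hl : ∀ N ∈ l.support, Adm n₁ n I₁ I₃ N ∧ Std n N)
    (h0 : φ F n (Finsupp.linearCombination F (mon F n) l) = 0) : l = 0 := by
  by_contra hne
  obtain ⟨M, hM, hmax⟩ := Finset.exists_max_image l.support En
    (Finsupp.support_nonempty_iff.2 hne)
  obtain ⟨hadm, hstd⟩ := hl M hM
  obtain ⟨A, B, hAB, hA, hB, hA0, hB0⟩ := std_split n₁ n M hstd hadm.2.2
  have h1 : coeff (Multiset.toFinsupp (ex n A))
      (spec F n₁ (φ F n (Finsupp.linearCombination F (mon F n) l))) = 0 := by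
    rw [h0]; simp
  rw [Finsupp.linearCombination_apply, Finsupp.sum, map_sum, map_sum, coeff_sum,
    Finset.sum_eq_single M] at h1
  · rw [map_smul, map_smul, coeff_smul, smul_eq_mul] at h1
    rcases mul_eq_zero.1 h1 with h | h
    · exact (Finsupp.mem_support_iff.1 hM) h
    · exact (coeff_ne_zero_iff F n₁ n M hadm.2.2 _).2 ⟨A, B, hAB, hA0, hB0, rfl⟩ h
  · intro N hN hNM
    rw [map_smul, map_smul, coeff_smul, smul_eq_mul]
    by_contra hc
    have hc' := right_ne_zero_of_mul hc
    obtain ⟨A', B', hAB', -, hB0', he⟩ :=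
      (coeff_ne_zero_iff F n₁ n N (hl N hN).1.2.2 _).1 hc'
    simp only at hB0' he
    obtain ⟨⟨c1, c2⟩, c3, c4⟩ := contents n₁ n I₁ I₃ A' B' A B (hAB' ▸ (hl N hN).1)
      (hAB ▸ hadm) hB0' hB0 he
    obtain ⟨r1, r2⟩ := rearr _ A A' rfl hA c1 c2
    obtain ⟨r3, r4⟩ := rearr _ B B' rfl hB c3 c4
    have hle := hmax N hN
    rw [← hAB, ← hAB', En_add, En_add] at hle
    apply hNM
    rw [← hAB, ← hAB', r2 (by omega), r4 (by omega)]
  · intro h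
    exact absurd hM h

/-- graded Lemma 3.3: if `f = Σ_s a_s f_s` is a combination of
degree-`k` monomials in the `z_{j,i}` all having the same multiset `I₁` of lower
indices and the same multiset `I₃` of upper indices, and `φ(f) = 0`, then `f` lies
in the ideal of `3×3` minors. -/
theorem sum_in_kernel_mem_three_minors
    (hn : n₁ < n) (m k : ℕ) (a : Fin m → F)
    (jf : Fin m → Fin k → ℕ) (iv : Fin m → Fin k → ℕ)
    (I₁ I₃ : Multiset ℕ)
    (hrange : ∀ s t, iv s t ≤ n₁ ∧ n₁ + 1 ≤ jf s t ∧ jf s t ≤ n + 1)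
    (hI₁ : ∀ s, (List.ofFn (iv s) : Multiset ℕ) = I₁)
    (hI₃ : ∀ s, (List.ofFn (jf s) : Multiset ℕ) = I₃)
    (f : MvPolynomial (ℕ × ℕ) F)
    (hf : f = ∑ s, C (a s) * ∏ t, Z F n (jf s t) (iv s t))
    (hker : φ F n f = 0) :
    f ∈ R₃ F n₁ n := by
  classical
  have hmem : f ∈ (R₃ F n₁ n).restrictScalars F ⊔
      Submodule.span F (mon F n '' {N | Adm n₁ n I₁ I₃ N ∧ Std n N}) := by
    rw [hf]
    refine Submodule.sum_mem _ fun s _ => ?_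
    rw [← smul_eq_C_mul]
    refine Submodule.smul_mem _ _ ?_
    have hmon : ∏ t, Z F n (jf s t) (iv s t) =
        mon F n (Multiset.map (fun t => (jf s t, iv s t)) Finset.univ.val) := by
      rw [mon, Multiset.map_map]
      rfl
    rw [hmon]
    refine straighten F n₁ n I₁ I₃ _ _ rfl ⟨?_, ?_, ?_⟩
    · rw [Multiset.map_map, ← hI₁ s, ← Fin.univ_val_map]
      rfl
    · rw [Multiset.map_map, ← hI₃ s, ← Fin.univ_val_map]
      rfl
    · intro p hp
      obtain ⟨t, -, rfl⟩ := Multiset.mem_map.1 hp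
      exact hrange s t
  obtain ⟨r, hr, g, hg, hrg⟩ := Submodule.mem_sup.1 hmem
  obtain ⟨l, hl, rfl⟩ := (Finsupp.mem_span_image_iff_linearCombination F).1 hg
  have hr' : r ∈ R₃ F n₁ n := hr
  have hz : φ F n (Finsupp.linearCombination F (mon F n) l) = 0 := by
    have := hker
    rw [← hrg, map_add, phi_R₃ F n₁ n r hr', zero_add] at this
    exact this
  have hl0 := std_indep F n₁ n I₁ I₃ l (fun N hN => hl hN) hz
  rw [← hrg, hl0, map_zero, add_zero]
  exact hr'

end Stmt14
end
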